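/- arXiv:2110.03077 — 2 statements merged into one kernel-verified Lean document; each statement's English description precedes it below -/
import Mathlib

section
/- For n = 6, the complex dimension of the diagonal coinvariant ring R_W of the Weyl group W(B_6) satisfies dim_ℂ R_W ≥ 13^6 + 3. -/
open MvPolynomial

/-- The action of the signed permutation `(ε, σ) ∈ W(Bₙ)` on the polynomial ring
`ℂ[x₁,…,xₙ,y₁,…,yₙ]`, sending `xᵢ ↦ εᵢ x_{σ(i)}` and `yᵢ ↦ εᵢ y_{σ(i)}`. -/
noncomputable def bAct (n : ℕ) (ε : Fin n → ℤˣ) (σ : Equiv.Perm (Fin n)) :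
    MvPolynomial (Fin n ⊕ Fin n) ℂ →ₐ[ℂ] MvPolynomial (Fin n ⊕ Fin n) ℂ :=
  aeval (Sum.elim
    (fun i => (((ε i : ℤ) : ℂ)) • X (Sum.inl (σ i)))
    (fun i => (((ε i : ℤ) : ℂ)) • X (Sum.inr (σ i))))

/-- The ideal `I_W` generated by the `W(Bₙ)`-invariant polynomials of positive degree
(equivalently, by the invariant polynomials with zero constant term). -/
noncomputable def diagIdeal (n : ℕ) : Ideal (MvPolynomial (Fin n ⊕ Fin n) ℂ) :=
  Ideal.span {f | (∀ ε σ, bAct n ε σ f = f) ∧ constantCoeff f = 0}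


abbrev RR := MvPolynomial (Fin 6 ⊕ Fin 6) ℂ
abbrev NN := (Fin 6 → ℕ) → ℂ

noncomputable def cA (n : ℕ) : ℂ := if Even n then (n : ℂ) else (n : ℂ) - 13

noncomputable def yfac (b j : ℕ) : ℂ := ∏ l ∈ Finset.range b, cA (j - l)

noncomputable def tt (a b k j : ℕ) : ℂ := if k + b = a + j then yfac b j else 0

lemma cA_zero : cA 0 = 0 := by simp [cA]

lemma cA_thirteen : cA 13 = 0 := by
  have : ¬ Even 13 := by decide
  simp [cA, this]

lemma cA_ne (n : ℕ) (h0 : 1 ≤ n) (h1 : n ≤ 12) : cA n ≠ 0 := by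
  unfold cA
  split_ifs with h
  · exact_mod_cast (by omega : n ≠ 0)
  · intro h2
    have : (n : ℂ) = 13 := by linear_combination h2
    have : n = 13 := by exact_mod_cast this
    omega

lemma yfac_zero_of_lt {b j : ℕ} (h : j < b) : yfac b j = 0 := by
  unfold yfac
  apply Finset.prod_eq_zero (Finset.mem_range.2 h)
  simp [cA_zero]

lemma yfac_succ (b j : ℕ) : yfac (b + 1) j = yfac b j * cA (j - b) := by
  simp [yfac, Finset.prod_range_succ]

lemma tt_x_zero (a b j : ℕ) : tt (a + 1) b 0 j = 0 := by
  unfold tt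
  split_ifs with h
  · exact yfac_zero_of_lt (by omega)
  · rfl

lemma tt_x_succ (a b k j : ℕ) : tt (a + 1) b (k + 1) j = tt a b k j := by
  unfold tt
  congr 1
  apply propext
  omega

noncomputable def cc (a b : ℕ) : ℂ :=
  (a : ℂ) - 13 * ((if Even (a + b) then 1 else 0) - (if Even b then 1 else 0))

lemma cc_zero (b : ℕ) : cc 0 b = 0 := by simp [cc]

lemma cA_eq (a b j : ℕ) (hb : b ≤ 2 * j + 1) :
    cA (2 * j + 1 - b + a) = cA (2 * j + 1 - b) + cc a b := by
  obtain ⟨m, hm⟩ := Nat.exists_eq_add_of_le hb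
  have h1 : 2 * j + 1 - b = m := by omega
  rw [h1]
  have h2 : Even m ↔ ¬ Even b := by
    have : ¬ Even (b + m) := by rw [← hm]; simp
    rw [Nat.even_add] at this
    tauto
  have h3 : Even (m + a) ↔ ¬ Even (a + b) := by
    rw [Nat.even_add, Nat.even_add, h2]; tauto
  unfold cA cc
  simp only [h2, h3]
  by_cases hb : Even b <;> by_cases hab : Even (a + b) <;> simp [hb, hab] <;> ring

lemma tt_y (a b k j : ℕ) :
    cA (k + 1) * tt a b (k + 1) (2 * j + 1)
      = tt a (b + 1) k (2 * j + 1) + cc a b * tt (a - 1) b k (2 * j + 1) := by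
  by_cases h : b ≤ 2 * j + 1
  · rcases a with _ | a
    · rw [cc_zero]
      unfold tt
      by_cases h1 : k + 1 + b = 0 + (2 * j + 1)
      · rw [if_pos h1, if_pos (by omega), yfac_succ]
        have : 2 * j + 1 - b = k + 1 := by omega
        rw [this]; ring
      · rw [if_neg h1, if_neg (by omega)]; ring
    · unfold tt
      by_cases h1 : k + 1 + b = (a + 1) + (2 * j + 1)
      · rw [if_pos h1, if_pos (by omega), if_pos (by omega), yfac_succ]
        have : k + 1 = 2 * j + 1 - b + (a + 1) := by omega
        rw [this, cA_eq _ _ _ h]; ring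
      · rw [if_neg h1, if_neg (by omega), if_neg (by omega)]; ring
  · have h1 : yfac b (2 * j + 1) = 0 := yfac_zero_of_lt (by omega)
    have h2 : yfac (b + 1) (2 * j + 1) = 0 := yfac_zero_of_lt (by omega)
    unfold tt
    simp [h1, h2]

lemma tt_sign (e : ℤˣ) (a b k j : ℕ) :
    (((e : ℤ) : ℂ)) ^ (a + b) * tt a b k (2 * j + 1)
      = (((e : ℤ) : ℂ)) ^ (k + 1) * tt a b k (2 * j + 1) := by
  rcases Int.units_eq_one_or e with rfl | rfl
  · simp
  · unfold tt
    split_ifs with h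
    · congr 1
      push_cast
      apply neg_one_pow_congr
      have : k = a + (2 * j + 1) - b := by omega
      have h2 : (k + 1) + (a + b) = 2 * (a + j + 1) := by omega
      have h3 : Even ((k + 1) + (a + b)) := by rw [h2]; simp
      rw [Nat.even_add] at h3
      exact h3.symm
    · simp

/-- the matrix whose determinant is the coefficient of `u_k` -/
noncomputable def mat (a b k : Fin 6 → ℕ) : Matrix (Fin 6) (Fin 6) ℂ :=
  Matrix.of fun i j => tt (a i) (b i) (k i) (2 * (j : ℕ) + 1)

noncomputable def Phi : RR →ₗ[ℂ] NN :=
  (basisMonomials (Fin 6 ⊕ Fin 6) ℂ).constr ℂ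
    (fun s k => (mat (fun i => s (Sum.inl i)) (fun i => s (Sum.inr i)) k).det)

lemma Phi_monomial (s : Fin 6 ⊕ Fin 6 →₀ ℕ) (c : ℂ) (k : Fin 6 → ℕ) :
    Phi (monomial s c) k
      = c * (mat (fun i => s (Sum.inl i)) (fun i => s (Sum.inr i)) k).det := by
  have h : (monomial s c : RR) = c • (basisMonomials (Fin 6 ⊕ Fin 6) ℂ s) := by
    simp [smul_monomial]
  rw [h, map_smul, Phi, Module.Basis.constr_basis]
  rfl

lemma ext_monomial {P : RR → Prop} (f : RR) (h1 : ∀ s c, P (monomial s c))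
    (h2 : ∀ p q, P p → P q → P (p + q)) : P f := by
  induction f using MvPolynomial.induction_on' with
  | monomial s c => exact h1 s c
  | add p q hp hq => exact h2 p q hp hq

lemma Phi_x (i : Fin 6) (f : RR) (k : Fin 6 → ℕ) :
    Phi (X (Sum.inl i) * f) k
      = if k i = 0 then 0 else Phi f (Function.update k i (k i - 1)) := by
  induction f using ext_monomial with
  | h1 s c =>
    have : (X (Sum.inl i) * monomial s c : RR) = monomial (Finsupp.single (Sum.inl i) 1 + s) c := by
      rw [X, monomial_mul, one_mul]
    rw [this, Phi_monomial, Phi_monomial]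
    split_ifs with h
    · rw [Matrix.det_eq_zero_of_row_eq_zero i, mul_zero]
      intro j
      simp only [mat, Matrix.of_apply, h]
      rw [show (Finsupp.single (Sum.inl i) 1 + s : Fin 6 ⊕ Fin 6 →₀ ℕ) (Sum.inl i : Fin 6 ⊕ Fin 6) = s (Sum.inl i) + 1 by
        simp [add_comm]]
      exact tt_x_zero _ _ _
    · congr 2
      ext i' j
      simp only [mat, Matrix.of_apply]
      by_cases hi : i' = i
      · subst hi
        obtain ⟨m, hm⟩ := Nat.exists_eq_succ_of_ne_zero h
        simp only [Function.update_self, hm]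
        rw [show (Finsupp.single (Sum.inl i') 1 + s : Fin 6 ⊕ Fin 6 →₀ ℕ) (Sum.inl i' : Fin 6 ⊕ Fin 6)
          = s (Sum.inl i') + 1 by simp [add_comm]]
        simpa using tt_x_succ _ _ _ _
      · have hi2 : i ≠ i' := fun h => hi h.symm
        simp [Function.update_of_ne hi, hi2]
  | h2 p q hp hq =>
    rw [mul_add, map_add, map_add]
    simp only [Pi.add_apply, hp, hq]
    split_ifs <;> simp

noncomputable def DD (i : Fin 6) : RR →ₗ[ℂ] RR :=
  (basisMonomials (Fin 6 ⊕ Fin 6) ℂ).constr ℂ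
    (fun s => monomial (s - Finsupp.single (Sum.inl i) 1) (cc (s (Sum.inl i)) (s (Sum.inr i))))

lemma DD_monomial (i : Fin 6) (s : Fin 6 ⊕ Fin 6 →₀ ℕ) (c : ℂ) :
    DD i (monomial s c) = monomial (s - Finsupp.single (Sum.inl i) 1)
      (c * cc (s (Sum.inl i)) (s (Sum.inr i))) := by
  have h : (monomial s c : RR) = c • (basisMonomials (Fin 6 ⊕ Fin 6) ℂ s) := by
    simp [smul_monomial]
  rw [h, map_smul, DD, Module.Basis.constr_basis, smul_monomial]
  rfl

lemma Phi_y (i : Fin 6) (f : RR) (k : Fin 6 → ℕ) :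
    cA (k i + 1) * Phi f (Function.update k i (k i + 1))
      = Phi (X (Sum.inr i) * f) k + Phi (DD i f) k := by
  induction f using ext_monomial with
  | h1 s c =>
    have : (X (Sum.inr i) * monomial s c : RR) = monomial (Finsupp.single (Sum.inr i) 1 + s) c := by
      rw [X, monomial_mul, one_mul]
    rw [this, DD_monomial, Phi_monomial, Phi_monomial, Phi_monomial]
    set M0 := mat (fun i => s (Sum.inl i)) (fun i => s (Sum.inr i)) k with hM0
    have e1 : mat (fun i => s (Sum.inl i)) (fun i => s (Sum.inr i))
        (Function.update k i (k i + 1)) = M0.updateRow i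
          (fun j => tt (s (Sum.inl i)) (s (Sum.inr i)) (k i + 1) (2 * (j : ℕ) + 1)) := by
      ext i' j
      by_cases hi : i' = i
      · subst hi; simp [mat]
      · simp [mat, hM0, Matrix.updateRow_ne hi, Function.update_of_ne hi]
    have e2 : mat (fun i' => (Finsupp.single (Sum.inr i) 1 + s : Fin 6 ⊕ Fin 6 →₀ ℕ) (Sum.inl i' : Fin 6 ⊕ Fin 6))
        (fun i' => (Finsupp.single (Sum.inr i) 1 + s : Fin 6 ⊕ Fin 6 →₀ ℕ) (Sum.inr i' : Fin 6 ⊕ Fin 6)) k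
        = M0.updateRow i
          (fun j => tt (s (Sum.inl i)) (s (Sum.inr i) + 1) (k i) (2 * (j : ℕ) + 1)) := by
      ext i' j
      by_cases hi : i' = i
      · subst hi; simp [mat, add_comm]
      · have hi2 : i ≠ i' := fun h => hi h.symm
        simp [mat, hM0, Matrix.updateRow_ne hi, hi2]
    have e3 : mat (fun i' => (s - Finsupp.single (Sum.inl i) 1 : Fin 6 ⊕ Fin 6 →₀ ℕ) (Sum.inl i' : Fin 6 ⊕ Fin 6))
        (fun i' => (s - Finsupp.single (Sum.inl i) 1 : Fin 6 ⊕ Fin 6 →₀ ℕ) (Sum.inr i' : Fin 6 ⊕ Fin 6)) k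
        = M0.updateRow i
          (fun j => tt (s (Sum.inl i) - 1) (s (Sum.inr i)) (k i) (2 * (j : ℕ) + 1)) := by
      ext i' j
      by_cases hi : i' = i
      · subst hi; simp [mat]
      · have hi2 : i ≠ i' := fun h => hi h.symm
        simp [mat, hM0, Matrix.updateRow_ne hi, hi2]
    rw [e1, e2, e3]
    have h1 : cA (k i + 1) * (M0.updateRow i
          (fun j => tt (s (Sum.inl i)) (s (Sum.inr i)) (k i + 1) (2 * (j : ℕ) + 1))).det
        = (M0.updateRow i
          (fun j => tt (s (Sum.inl i)) (s (Sum.inr i) + 1) (k i) (2 * (j : ℕ) + 1))).det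
        + cc (s (Sum.inl i)) (s (Sum.inr i)) * (M0.updateRow i
          (fun j => tt (s (Sum.inl i) - 1) (s (Sum.inr i)) (k i) (2 * (j : ℕ) + 1))).det := by
      rw [← Matrix.det_updateRow_smul, ← Matrix.det_updateRow_smul, ← Matrix.det_updateRow_add]
      congr 2
      funext j
      simpa using tt_y _ _ _ _
    linear_combination c * h1
  | h2 p q hp hq =>
    rw [mul_add, map_add, map_add, map_add, map_add]
    simp only [Pi.add_apply]
    linear_combination hp + hq


lemma bAct_monomial (ε : Fin 6 → ℤˣ) (σ : Equiv.Perm (Fin 6)) (s : Fin 6 ⊕ Fin 6 →₀ ℕ) (c : ℂ) :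
    bAct 6 ε σ (monomial s c) = monomial (s.mapDomain (Sum.map σ σ))
      (c * ∏ i, (((ε i : ℤ) : ℂ)) ^ (s (Sum.inl i) + s (Sum.inr i))) := by
  have h1 : (monomial (s.mapDomain (Sum.map σ σ)) (1 : ℂ) : RR)
      = ∏ v, X (Sum.map σ σ v) ^ s v := by
    have : (monomial (s.mapDomain (Sum.map σ σ)) (1 : ℂ) : RR)
        = rename (Sum.map σ σ) (monomial s 1) := by rw [rename_monomial]
    rw [this, monomial_eq, map_mul, Finsupp.prod_fintype _ _ (by simp)]
    simp
  have h2 : (monomial (s.mapDomain (Sum.map σ σ))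
      (c * ∏ i, (((ε i : ℤ) : ℂ)) ^ (s (Sum.inl i) + s (Sum.inr i))) : RR)
      = C (c * ∏ i, (((ε i : ℤ) : ℂ)) ^ (s (Sum.inl i) + s (Sum.inr i)))
        * monomial (s.mapDomain (Sum.map σ σ)) 1 := by
    rw [C_mul_monomial, mul_one]
  rw [h2, h1, bAct, aeval_monomial, Finsupp.prod_fintype _ _ (by simp), Fintype.prod_sum_type,
    Fintype.prod_sum_type]
  simp only [Sum.elim_inl, Sum.elim_inr, Sum.map_inl, Sum.map_inr, smul_eq_C_mul, mul_pow,
    Finset.prod_mul_distrib, pow_add, C_mul, map_prod, C_pow, algebraMap_eq]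
  ring

lemma Phi_bAct (ε : Fin 6 → ℤˣ) (σ : Equiv.Perm (Fin 6)) (f : RR) (k : Fin 6 → ℕ) :
    Phi (bAct 6 ε σ f) k = ((Equiv.Perm.sign σ : ℤ) : ℂ)
      * (∏ i, (((ε i : ℤ) : ℂ)) ^ (k (σ i) + 1)) * Phi f (k ∘ σ) := by
  induction f using ext_monomial with
  | h1 s c =>
    rw [bAct_monomial, Phi_monomial, Phi_monomial]
    have hinj : Function.Injective (Sum.map σ σ : Fin 6 ⊕ Fin 6 → Fin 6 ⊕ Fin 6) :=
      Function.Injective.sumMap σ.injective σ.injective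
    set M1 := mat (fun i => (s.mapDomain (Sum.map σ σ)) (Sum.inl i))
      (fun i => (s.mapDomain (Sum.map σ σ)) (Sum.inr i)) k with hM1
    set M2 := mat (fun i => s (Sum.inl i)) (fun i => s (Sum.inr i)) (k ∘ σ) with hM2
    have hl : ∀ i, (s.mapDomain (Sum.map σ σ)) (Sum.inl (σ i)) = s (Sum.inl i) := fun i => by
      have := Finsupp.mapDomain_apply hinj s (Sum.inl i)
      simpa using this
    have hr : ∀ i, (s.mapDomain (Sum.map σ σ)) (Sum.inr (σ i)) = s (Sum.inr i) := fun i => by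
      have := Finsupp.mapDomain_apply hinj s (Sum.inr i)
      simpa using this
    have e1 : M1.submatrix σ id = M2 := by
      ext i j
      simp [hM1, hM2, mat, hl, hr]
    have e2 : M2.det = ((Equiv.Perm.sign σ : ℤ) : ℂ) * M1.det := by
      rw [← e1, Matrix.det_permute]
    have e3 : M1.det = ((Equiv.Perm.sign σ : ℤ) : ℂ) * M2.det := by
      rw [e2, ← mul_assoc, ← Int.cast_mul, ← Units.val_mul, Int.units_mul_self]; simp
    have e4 : (∏ i, (((ε i : ℤ) : ℂ)) ^ (s (Sum.inl i) + s (Sum.inr i))) * M2.det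
        = (∏ i, (((ε i : ℤ) : ℂ)) ^ (k (σ i) + 1)) * M2.det := by
      rw [← Matrix.det_mul_column, ← Matrix.det_mul_column]
      congr 1
      ext i j
      simpa [hM2, mat] using tt_sign (ε i) (s (Sum.inl i)) (s (Sum.inr i)) (k (σ i)) j
    rw [e3]
    linear_combination c * ((Equiv.Perm.sign σ : ℤ) : ℂ) * e4
  | h2 p q hp hq =>
    simp only [map_add, Pi.add_apply, hp, hq]
    ring

/-- The range of `Phi` allows matrix units in each coordinate. -/
lemma Phi_xpow (i : Fin 6) (c : ℕ) (f : RR) : ∃ g : RR, ∀ k : Fin 6 → ℕ,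
    Phi g k = if k i < c then 0 else Phi f (Function.update k i (k i - c)) := by
  induction c with
  | zero => exact ⟨f, fun k => by simp⟩
  | succ c ih =>
    obtain ⟨g, hg⟩ := ih
    refine ⟨X (Sum.inl i) * g, fun k => ?_⟩
    rw [Phi_x, hg]
    simp only [Function.update_self, Function.update_idem]
    by_cases h0 : k i = 0
    · simp [h0]
    · by_cases h1 : k i < c + 1
      · rw [if_neg h0, if_pos (by omega), if_pos h1]
      · rw [if_neg h0, if_neg (by omega), if_neg h1, Nat.sub_sub, add_comm 1 c]

lemma Phi_ypow (i : Fin 6) (c : ℕ) (f : RR) : ∃ g : RR, ∀ k : Fin 6 → ℕ,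
    Phi g k = (∏ l ∈ Finset.range c, cA (k i + l + 1)) *
      Phi f (Function.update k i (k i + c)) := by
  induction c with
  | zero => exact ⟨f, fun k => by simp⟩
  | succ c ih =>
    obtain ⟨g, hg⟩ := ih
    refine ⟨X (Sum.inr i) * g + DD i g, fun k => ?_⟩
    rw [map_add, Pi.add_apply, ← Phi_y, hg]
    simp only [Function.update_self, Function.update_idem]
    rw [Finset.prod_range_succ', show k i + 1 + c = k i + (c + 1) by ring,
      show k i + 0 + 1 = k i + 1 by ring]
    have : ∀ l, k i + 1 + l + 1 = k i + (l + 1) + 1 := fun l => by ring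
    simp only [this]
    ring

lemma Phi_unit (i : Fin 6) (p l : ℕ) (hl : l ≤ 12) (f : RR) :
    ∃ g : RR, ∀ k : Fin 6 → ℕ, (∀ j, k j ≤ 12) →
      Phi g k = if k i = p then Phi f (Function.update k i l) else 0 := by
  obtain ⟨g1, h1⟩ := Phi_xpow i (12 - l) f
  obtain ⟨g2, h2⟩ := Phi_ypow i 12 g1
  obtain ⟨g3, h3⟩ := Phi_xpow i p g2
  have hc : (∏ l ∈ Finset.range 12, cA (0 + l + 1)) ≠ 0 := by
    rw [Finset.prod_ne_zero_iff]
    intro a ha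
    rw [Finset.mem_range] at ha
    exact cA_ne _ (by omega) (by omega)
  refine ⟨(∏ l ∈ Finset.range 12, cA (0 + l + 1))⁻¹ • g3, fun k hk => ?_⟩
  rw [map_smul, Pi.smul_apply, h3, h2, h1]
  simp only [Function.update_self, Function.update_idem]
  by_cases h : k i = p
  · rw [if_pos h, if_neg (by omega), if_neg (by omega), show k i - p = 0 by omega,
      show 0 + 12 - (12 - l) = l by omega, smul_eq_mul, ← mul_assoc, inv_mul_cancel₀ hc, one_mul]
  · rw [if_neg h]
    by_cases h' : k i < p
    · rw [if_pos h', smul_zero]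
    · rw [if_neg h']
      have : (∏ l ∈ Finset.range 12, cA (k i - p + l + 1)) = 0 := by
        have h4 := hk i
        apply Finset.prod_eq_zero (i := 12 - (k i - p)) (Finset.mem_range.2 (by omega))
        rw [show k i - p + (12 - (k i - p)) + 1 = 13 by omega, cA_thirteen]
      rw [this]; simp

/-- the base point `(1,3,5,7,9,11)` -/
def l0 : Fin 6 → ℕ := fun i => 2 * (i : ℕ) + 1

lemma Phi_one_l0 : Phi 1 l0 = 1 := by
  have : (1 : RR) = monomial 0 1 := rfl
  rw [this, Phi_monomial]
  have : mat (fun i => (0 : Fin 6 ⊕ Fin 6 →₀ ℕ) (Sum.inl i))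
      (fun i => (0 : Fin 6 ⊕ Fin 6 →₀ ℕ) (Sum.inr i)) l0 = 1 := by
    ext i j
    simp only [mat, Matrix.of_apply, l0, tt, Finsupp.coe_zero, Pi.zero_apply, yfac,
      Finset.range_zero, Finset.prod_empty, Matrix.one_apply]
    congr 1
    apply propext
    rw [Fin.ext_iff]
    omega
  rw [this]; simp

lemma Phi_surj_aux (p : Fin 6 → ℕ) (S : Finset (Fin 6)) :
    ∃ g : RR, ∀ k : Fin 6 → ℕ, (∀ j, k j ≤ 12) →
      Phi g k = if (∀ i ∈ S, k i = p i) then Phi 1 (fun i => if i ∈ S then l0 i else k i)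
        else 0 := by
  induction S using Finset.induction_on with
  | empty => exact ⟨1, fun k _ => by simp⟩
  | insert a S ha ih =>
    obtain ⟨g, hg⟩ := ih
    have hl : l0 a ≤ 12 := by unfold l0; omega
    obtain ⟨g', hg'⟩ := Phi_unit a (p a) (l0 a) hl g
    refine ⟨g', fun k hk => ?_⟩
    rw [hg' k hk, hg]
    · by_cases h1 : k a = p a
      · rw [if_pos h1]
        have e1 : (∀ i ∈ S, Function.update k a (l0 a) i = p i) ↔
            (∀ i ∈ insert a S, k i = p i) := by
          constructor
          · intro h i hi
            rcases Finset.mem_insert.1 hi with hia | his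
            · rw [hia]; exact h1
            · have := h i his
              rwa [Function.update_of_ne (by rintro rfl; exact ha his)] at this
          · intro h i hi
            rw [Function.update_of_ne (by rintro rfl; exact ha hi)]
            exact h i (Finset.mem_insert_of_mem hi)
        have e2 : (fun i => if i ∈ S then l0 i else Function.update k a (l0 a) i)
            = (fun i => if i ∈ insert a S then l0 i else k i) := by
          funext i
          by_cases hi : i = a
          · subst hi; simp [ha]
          · simp [hi, Function.update_of_ne hi]
        simp only [e1, e2]
      · rw [if_neg h1, if_neg]
        intro h
        exact h1 (h a (Finset.mem_insert_self _ _))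
    · intro j
      by_cases hj : j = a
      · subst hj; simpa using hl
      · rw [Function.update_of_ne hj]; exact hk j

abbrev MM := (Fin 6 → Fin 13) → ℂ

/-- truncation -/
def tau : NN →ₗ[ℂ] MM where
  toFun u := fun k => u (fun i => (k i : ℕ))
  map_add' _ _ := rfl
  map_smul' _ _ := rfl

noncomputable def PhiM : RR →ₗ[ℂ] MM := tau ∘ₗ Phi

lemma PhiM_apply (f : RR) (k : Fin 6 → Fin 13) : PhiM f k = Phi f (fun i => (k i : ℕ)) := rfl

lemma PhiM_eq_zero_iff (f : RR) :
    PhiM f = 0 ↔ ∀ k : Fin 6 → ℕ, (∀ j, k j ≤ 12) → Phi f k = 0 := by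
  constructor
  · intro h k hk
    have := congrFun h (fun i => ⟨k i, Nat.lt_succ_of_le (hk i)⟩)
    exact this
  · intro h
    funext k
    rw [PhiM_apply, h]
    · rfl
    · intro j; exact Nat.le_of_lt_succ (k j).2

lemma PhiM_surj : Function.Surjective PhiM := by
  have h : ∀ p : Fin 6 → Fin 13, ∃ g, PhiM g = Pi.single p 1 := by
    intro p
    obtain ⟨g, hg⟩ := Phi_surj_aux (fun i => (p i : ℕ)) Finset.univ
    refine ⟨g, ?_⟩
    funext k
    rw [PhiM_apply, hg]
    · by_cases hk : k = p
      · subst hk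
        simp only [Finset.mem_univ, if_true, implies_true, Pi.single_eq_same]
        exact Phi_one_l0
      · rw [Pi.single_eq_of_ne hk, if_neg]
        intro h
        exact hk (funext fun i => Fin.ext (h i (Finset.mem_univ i)))
    · intro j; exact Nat.le_of_lt_succ (k j).2
  rw [← LinearMap.range_eq_top, eq_top_iff]
  intro m _
  rw [pi_eq_sum_univ m]
  apply Submodule.sum_mem
  intro p _
  apply Submodule.smul_mem
  obtain ⟨g, hg⟩ := h p
  refine ⟨g, ?_⟩
  rw [hg]
  funext q
  simp [Pi.single_apply, eq_comm]

def Anti (u : NN) : Prop :=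
  ∀ (σ : Equiv.Perm (Fin 6)) (k : Fin 6 → ℕ), u (k ∘ σ) = ((Equiv.Perm.sign σ : ℤ) : ℂ) * u k

lemma anti_reduce (u : NN) (hu : Anti u)
    (h : ∀ k : Fin 6 → ℕ, StrictMono k → (∀ j, k j ≤ 12) → u k = 0) :
    ∀ k : Fin 6 → ℕ, (∀ j, k j ≤ 12) → u k = 0 := by
  intro k hk
  by_cases hi : Function.Injective k
  · have h1 := hu (Tuple.sort k) k
    have h2 : StrictMono (k ∘ Tuple.sort k) :=
      (Tuple.monotone_sort k).strictMono_of_injective (hi.comp (Tuple.sort k).injective)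
    rw [h _ h2 (fun j => hk _)] at h1
    rcases mul_eq_zero.1 h1.symm with h3 | h3
    · exfalso
      rcases Int.units_eq_one_or (Equiv.Perm.sign (Tuple.sort k)) with h4 | h4 <;>
        rw [h4] at h3 <;> simp at h3
    · exact h3
  · unfold Function.Injective at hi
    push Not at hi
    obtain ⟨a, b, hab, hne⟩ := hi
    have h1 := hu (Equiv.swap a b) k
    have h2 : k ∘ Equiv.swap a b = k := by
      funext i
      simp only [Function.comp, Equiv.swap_apply_def]
      split_ifs with h h' <;> simp_all
    rw [h2, Equiv.Perm.sign_swap hne] at h1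
    simp at h1
    have : (2 : ℂ) * u k = 0 := by linear_combination h1
    simpa using this

lemma anti_odd (u : NN) (hu : Anti u) (he : ∀ k i, Even (k i) → u k = 0) (h0 : u l0 = 0) :
    ∀ k : Fin 6 → ℕ, (∀ j, k j ≤ 12) → u k = 0 := by
  apply anti_reduce u hu
  intro k hk hb
  by_cases hev : ∃ i, Even (k i)
  · obtain ⟨i, hi⟩ := hev; exact he k i hi
  · push Not at hev
    have : k = l0 := by
      have a0 := hk (show (0 : Fin 6) < 1 by decide)
      have a1 := hk (show (1 : Fin 6) < 2 by decide)
      have a2 := hk (show (2 : Fin 6) < 3 by decide)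
      have a3 := hk (show (3 : Fin 6) < 4 by decide)
      have a4 := hk (show (4 : Fin 6) < 5 by decide)
      have a5 := hb 5
      have o := fun i => Nat.not_even_iff.1 (hev i)
      have o0 := o 0
      have o1 := o 1
      have o2 := o 2
      have o3 := o 3
      have o4 := o 4
      have o5 := o 5
      funext i
      fin_cases i <;> simp [l0] <;> omega
    rw [this, h0]

/-- the seven even base points -/
def e0 (t : Fin 7) : Fin 6 → ℕ := fun i => 2 * ((t.succAbove i : Fin 7) : ℕ)

lemma anti_even (u : NN) (hu : Anti u) (he : ∀ k i, ¬ Even (k i) → u k = 0)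
    (h0 : ∀ t, u (e0 t) = 0) :
    ∀ k : Fin 6 → ℕ, (∀ j, k j ≤ 12) → u k = 0 := by
  apply anti_reduce u hu
  intro k hk hb
  by_cases hev : ∃ i, ¬ Even (k i)
  · obtain ⟨i, hi⟩ := hev; exact he k i hi
  · push Not at hev
    have : ∃ t, k = e0 t := by
      have a0 := hk (show (0 : Fin 6) < 1 by decide)
      have a1 := hk (show (1 : Fin 6) < 2 by decide)
      have a2 := hk (show (2 : Fin 6) < 3 by decide)
      have a3 := hk (show (3 : Fin 6) < 4 by decide)
      have a4 := hk (show (4 : Fin 6) < 5 by decide)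
      have a5 := hb 5
      have o := fun i => Nat.even_iff.1 (hev i)
      have o0 := o 0
      have o1 := o 1
      have o2 := o 2
      have o3 := o 3
      have o4 := o 4
      have o5 := o 5
      have key : ∀ t : Fin 7, (k 0 = e0 t 0 ∧ k 1 = e0 t 1 ∧ k 2 = e0 t 2 ∧ k 3 = e0 t 3 ∧
          k 4 = e0 t 4 ∧ k 5 = e0 t 5) → k = e0 t := by
        rintro t ⟨b0, b1, b2, b3, b4, b5⟩
        funext i
        fin_cases i <;> assumption
      by_cases c0 : k 0 = 2
      · exact ⟨0, key 0 (by simp [e0, Fin.succAbove]; omega)⟩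
      by_cases c1 : k 1 = 4
      · exact ⟨1, key 1 (by simp [e0, Fin.succAbove, Fin.lt_def]; omega)⟩
      by_cases c2 : k 2 = 6
      · exact ⟨2, key 2 (by simp [e0, Fin.succAbove, Fin.lt_def]; omega)⟩
      by_cases c3 : k 3 = 8
      · exact ⟨3, key 3 (by simp [e0, Fin.succAbove, Fin.lt_def]; omega)⟩
      by_cases c4 : k 4 = 10
      · exact ⟨4, key 4 (by simp [e0, Fin.succAbove, Fin.lt_def]; omega)⟩
      by_cases c5 : k 5 = 12
      · exact ⟨5, key 5 (by simp [e0, Fin.succAbove, Fin.lt_def]; omega)⟩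
      · exact ⟨6, key 6 (by simp [e0, Fin.succAbove, Fin.lt_def]; omega)⟩
    obtain ⟨t, rfl⟩ := this
    exact h0 t


lemma main_dim (I : Ideal RR) [Module.Finite ℂ (RR ⧸ I)]
    (h0 : ∀ f ∈ I, homogeneousComponent 0 f = 0)
    {N : Type} [AddCommGroup N] [Module ℂ N] (Ψ : RR →ₗ[ℂ] N) (hs : Function.Surjective Ψ)
    (hΨ : ∀ f ∈ I, ∀ d, ∃ r ∈ restrictTotalDegree (Fin 6 ⊕ Fin 6) ℂ d,
      Ψ (homogeneousComponent (d + 1) f) = Ψ r) :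
    Module.finrank ℂ N ≤ Module.finrank ℂ (RR ⧸ I) := by
  let mon : (Fin 6 ⊕ Fin 6 →₀ ℕ) → RR := fun s => monomial s 1
  let q : RR →ₗ[ℂ] (RR ⧸ I) := (Ideal.Quotient.mkₐ ℂ I).toLinearMap
  have hq : ∀ f, q f = 0 ↔ f ∈ I := fun f => Ideal.Quotient.eq_zero_iff_mem
  obtain ⟨κ, a, -, hspan, hli⟩ := exists_linearIndependent' (K := ℂ) (q ∘ mon)
  have hmon : Submodule.span ℂ (Set.range mon) = ⊤ := by
    have := (basisMonomials (Fin 6 ⊕ Fin 6) ℂ).span_eq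
    simpa [mon, coe_basisMonomials] using this
  have : Finite κ := hli.finite
  cases nonempty_fintype κ
  have hcard : Fintype.card κ ≤ Module.finrank ℂ (RR ⧸ I) := hli.fintype_card_le_finrank
  set C0 := Submodule.span ℂ (Set.range (mon ∘ a)) with hC0
  set S := Submodule.span ℂ (Set.range (Ψ ∘ mon ∘ a)) with hS
  have hCS : C0.map Ψ = S := by
    rw [hC0, hS, Submodule.map_span, ← Set.range_comp]
  have hCq : C0.map q = ⊤ := by
    rw [hC0, Submodule.map_span, ← Set.range_comp, ← Function.comp_assoc, hspan, Set.range_comp,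
      ← Submodule.map_span, hmon, Submodule.map_top, LinearMap.range_eq_top]
    exact Ideal.Quotient.mk_surjective
  have hCh : ∀ e, ∀ c ∈ C0, homogeneousComponent e c ∈ C0 := by
    intro e c hc
    induction hc using Submodule.span_induction with
    | mem x hx =>
      obtain ⟨i, rfl⟩ := hx
      have hm : (mon (a i)).IsHomogeneous (a i).degree := isHomogeneous_monomial _ rfl
      simp only [Function.comp]
      rw [homogeneousComponent_of_mem hm]
      split_ifs
      · exact Submodule.subset_span ⟨i, rfl⟩
      · exact Submodule.zero_mem _
    | zero => simp
    | add x y _ _ hx hy => rw [map_add]; exact Submodule.add_mem _ hx hy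
    | smul r x _ hx => rw [map_smul]; exact Submodule.smul_mem _ _ hx
  have key : ∀ d, ∀ f ∈ restrictTotalDegree (Fin 6 ⊕ Fin 6) ℂ d, Ψ f ∈ S := by
    intro d
    induction d using Nat.strong_induction_on with
    | _ d ih =>
    intro f hf
    have hf' : q f ∈ C0.map q := by rw [hCq]; trivial
    obtain ⟨c, hc, hcf⟩ := hf'
    have hI : f - c ∈ I := by rw [← hq, map_sub, hcf, sub_self]
    rw [mem_restrictTotalDegree] at hf
    rw [← sum_homogeneousComponent f, map_sum]
    apply Submodule.sum_mem
    intro e he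
    rw [Finset.mem_range] at he
    have : homogeneousComponent e f = homogeneousComponent e c + homogeneousComponent e (f - c) := by
      rw [map_sub]; ring
    rw [this, map_add]
    apply Submodule.add_mem
    · rw [← hCS]; exact ⟨_, hCh e c hc, rfl⟩
    · rcases e with _ | e
      · rw [h0 _ hI, map_zero]; exact Submodule.zero_mem _
      · obtain ⟨r, hr, hrr⟩ := hΨ _ hI e
        rw [hrr]
        exact ih e (by omega) r hr
  have hStop : S = ⊤ := by
    rw [eq_top_iff]
    intro n _
    obtain ⟨f, rfl⟩ := hs n
    exact key f.totalDegree f (by rw [mem_restrictTotalDegree])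
  calc Module.finrank ℂ N = (Set.range (Ψ ∘ mon ∘ a)).finrank ℂ := by
        rw [Set.finrank, ← hS, hStop, finrank_top]
    _ ≤ Fintype.card κ := finrank_range_le_card _
    _ ≤ _ := hcard

/-! ### finiteness -/

lemma pow_mem_diag (v : Fin 6 → Fin 6 ⊕ Fin 6)
    (hv : ∀ ε σ i, bAct 6 ε σ (X (v i)) = (((ε i : ℤ) : ℂ)) • X (v (σ i))) (i : Fin 6) :
    (X (v i) : RR) ^ 12 ∈ diagIdeal 6 := by
  let p : Polynomial RR := ∏ j, (Polynomial.X ^ 2 - Polynomial.C (X (v j) ^ 2 : RR))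
  have hp0 : p.eval (X (v i)) = 0 := by
    simp only [p, Polynomial.eval_prod]
    exact Finset.prod_eq_zero (Finset.mem_univ i) (by simp)
  have hpc : p.map (constantCoeff : RR →+* ℂ) = Polynomial.X ^ 12 := by
    simp only [p, Polynomial.map_prod]
    simp [← pow_mul]
  have hpi : ∀ ε σ, p.map (bAct 6 ε σ : RR →+* RR) = p := by
    intro ε σ
    simp only [p, Polynomial.map_prod]
    have : ∀ j, Polynomial.map (bAct 6 ε σ : RR →+* RR)
        (Polynomial.X ^ 2 - Polynomial.C (X (v j) ^ 2 : RR))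
        = Polynomial.X ^ 2 - Polynomial.C (X (v (σ j)) ^ 2 : RR) := by
      intro j
      have h1 : bAct 6 ε σ (X (v j)) ^ 2 = X (v (σ j)) ^ 2 := by
        rw [hv, smul_pow]
        rcases Int.units_eq_one_or (ε j) with h | h <;> simp [h]
      simp only [Polynomial.map_sub, Polynomial.map_pow, Polynomial.map_X, Polynomial.map_C,
        RingHom.coe_coe, map_pow]
      rw [← map_pow, h1, map_pow]
    simp only [this]
    exact Equiv.prod_comp σ (fun j => Polynomial.X ^ 2 - Polynomial.C (X (v j) ^ 2 : RR))
  have hdeg : p.Monic ∧ p.natDegree = 12 := by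
    have hm : ∀ j ∈ Finset.univ,
        (Polynomial.X ^ 2 - Polynomial.C (X (v j) ^ 2 : RR)).Monic := fun j _ =>
      Polynomial.monic_X_pow_sub_C _ (by norm_num)
    refine ⟨Polynomial.monic_prod_of_monic _ _ hm, ?_⟩
    rw [Polynomial.natDegree_prod_of_monic _ _ hm]
    simp [-map_pow]
  have hcoeff : ∀ n < 12, p.coeff n ∈ diagIdeal 6 := by
    intro n hn
    apply Ideal.subset_span
    refine ⟨fun ε σ => ?_, ?_⟩
    · have := congrArg (fun r => Polynomial.coeff r n) (hpi ε σ)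
      simpa [Polynomial.coeff_map] using this
    · have := congrArg (fun r => Polynomial.coeff r n) hpc
      simp only [Polynomial.coeff_map, Polynomial.coeff_X_pow] at this
      rw [this, if_neg (by omega)]
  rw [Polynomial.eval_eq_sum_range, hdeg.2, Finset.sum_range_succ] at hp0
  have hl : p.coeff 12 = 1 := by
    have := hdeg.1; rwa [Polynomial.Monic, Polynomial.leadingCoeff, hdeg.2] at this
  rw [hl, one_mul] at hp0
  have : (X (v i) : RR) ^ 12 = - ∑ n ∈ Finset.range 12, p.coeff n * X (v i) ^ n := by
    linear_combination hp0
  rw [this]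
  apply neg_mem
  apply Ideal.sum_mem
  intro n hn
  exact Ideal.mul_mem_right _ _ (hcoeff n (Finset.mem_range.1 hn))

instance finite_quot : Module.Finite ℂ (RR ⧸ diagIdeal 6) := by
  have hx : ∀ v : Fin 6 ⊕ Fin 6, (X v : RR) ^ 12 ∈ diagIdeal 6 := by
    rintro (i | i)
    · exact pow_mem_diag Sum.inl (fun ε σ i => by simp [bAct]) i
    · exact pow_mem_diag Sum.inr (fun ε σ i => by simp [bAct]) i
  have hIntegral : Algebra.IsIntegral ℂ (RR ⧸ diagIdeal 6) := by
    constructor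
    intro x
    obtain ⟨f, rfl⟩ := Ideal.Quotient.mk_surjective x
    induction f using MvPolynomial.induction_on with
    | C a => exact isIntegral_algebraMap (R := ℂ) (A := RR ⧸ diagIdeal 6) (x := a)
    | add p q hp hq => rw [map_add]; exact hp.add hq
    | mul_X p v hp =>
      rw [map_mul]
      refine hp.mul ?_
      refine IsIntegral.of_pow (n := 12) (by norm_num) ?_
      rw [← map_pow, Ideal.Quotient.eq_zero_iff_mem.2 (hx v)]
      exact isIntegral_zero
  have : Algebra.FiniteType ℂ (RR ⧸ diagIdeal 6) := inferInstance
  exact Algebra.IsIntegral.finite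

/-! ### filtration -/

lemma sign_flip (i : Fin 6) (k : Fin 6 → ℕ) :
    ∏ j, ((((Function.update (1 : Fin 6 → ℤˣ) i (-1)) j : ℤ) : ℂ)) ^ (k j) = (-1) ^ (k i) := by
  rw [Finset.prod_eq_single i]
  · simp
  · intro b _ hb
    simp [Function.update_of_ne hb]
  · simp

lemma Phi_inv_anti (h : RR) (hh : ∀ ε σ, bAct 6 ε σ h = h) : Anti (Phi h) := by
  intro σ k
  have h1 := Phi_bAct 1 σ h k
  rw [hh] at h1
  simp only [Pi.one_apply, Units.val_one, Int.cast_one, one_pow, Finset.prod_const_one,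
    mul_one] at h1
  rw [h1, ← mul_assoc, ← Int.cast_mul, ← Units.val_mul, Int.units_mul_self]; simp

lemma Phi_inv_even (h : RR) (hh : ∀ ε σ, bAct 6 ε σ h = h) (k : Fin 6 → ℕ) (i : Fin 6)
    (hi : Even (k i)) : Phi h k = 0 := by
  have h1 := Phi_bAct (Function.update 1 i (-1)) 1 h k
  rw [hh] at h1
  simp only [Equiv.Perm.coe_one, id, Function.comp_id] at h1
  rw [sign_flip i (fun j => k j + 1), Odd.neg_one_pow hi.add_one] at h1
  simp at h1
  have : (2 : ℂ) * Phi h k = 0 := by linear_combination h1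
  simpa using this

lemma Phi_inv (h : RR) (hh : ∀ ε σ, bAct 6 ε σ h = h) : ∃ c : ℂ, PhiM h = PhiM (C c) := by
  refine ⟨Phi h l0, ?_⟩
  rw [← sub_eq_zero, ← map_sub, PhiM_eq_zero_iff]
  set g := h - C (Phi h l0) with hg
  have hg' : ∀ ε σ, bAct 6 ε σ g = g := by
    intro ε σ
    rw [hg, map_sub, hh]
    congr 1
    simp [bAct]
  apply anti_odd _ (Phi_inv_anti g hg') (Phi_inv_even g hg')
  have : (C (Phi h l0) : RR) = Phi h l0 • 1 := by rw [smul_eq_C_mul, mul_one]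
  rw [hg, map_sub, Pi.sub_apply, this, map_smul, Pi.smul_apply, Phi_one_l0]
  simp

noncomputable def FF (d : ℕ) : Submodule ℂ MM :=
  (restrictTotalDegree (Fin 6 ⊕ Fin 6) ℂ d).map PhiM

noncomputable def GG (d : ℕ) : Submodule ℂ RR :=
  restrictTotalDegree (Fin 6 ⊕ Fin 6) ℂ (d + 1) ⊓ (FF d).comap PhiM

lemma X_mul_mem (v : Fin 6 ⊕ Fin 6) (d : ℕ) (f : RR)
    (hf : f ∈ restrictTotalDegree (Fin 6 ⊕ Fin 6) ℂ d) :
    X v * f ∈ restrictTotalDegree (Fin 6 ⊕ Fin 6) ℂ (d + 1) := by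
  rw [mem_restrictTotalDegree] at *
  calc (X v * f).totalDegree ≤ (X v : RR).totalDegree + f.totalDegree := totalDegree_mul _ _
    _ ≤ d + 1 := by rw [totalDegree_X]; omega

lemma DD_mem (i : Fin 6) (d : ℕ) (f : RR)
    (hf : f ∈ restrictTotalDegree (Fin 6 ⊕ Fin 6) ℂ d) :
    DD i f ∈ restrictTotalDegree (Fin 6 ⊕ Fin 6) ℂ d := by
  rw [f.as_sum, map_sum]
  apply Submodule.sum_mem
  intro s hs
  rw [DD_monomial, mem_restrictTotalDegree]
  rw [mem_restrictTotalDegree] at hf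
  refine (totalDegree_monomial_le _ _).trans (le_trans ?_ ((le_totalDegree hs).trans hf))
  change (s - Finsupp.single (Sum.inl i) 1).degree ≤ s.degree
  exact Finsupp.degree_mono tsub_le_self

lemma X_mul_GG (v : Fin 6 ⊕ Fin 6) (d : ℕ) (f : RR) (hf : f ∈ GG d) : X v * f ∈ GG (d + 1) := by
  obtain ⟨h1, r, hr, hrf⟩ := hf
  refine ⟨X_mul_mem v _ f h1, ?_⟩
  have hr' : r ∈ restrictTotalDegree (Fin 6 ⊕ Fin 6) ℂ (d + 1) := by
    have := (mem_restrictTotalDegree _ _ _).1 hr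
    rw [mem_restrictTotalDegree]; omega
  have h0 : PhiM (f - r) = 0 := by rw [map_sub, hrf, sub_self]
  have h0' := (PhiM_eq_zero_iff _).1 h0
  rcases v with i | i
  · refine ⟨X (Sum.inl i) * r, X_mul_mem _ _ _ hr, ?_⟩
    rw [eq_comm, ← sub_eq_zero, ← map_sub, ← mul_sub, PhiM_eq_zero_iff]
    intro k hk
    rw [Phi_x]
    split_ifs
    · rfl
    · apply h0'
      intro j
      by_cases hj : j = i
      · subst hj; rw [Function.update_self]; have := hk j; omega
      · rw [Function.update_of_ne hj]; exact hk j
  · refine ⟨X (Sum.inr i) * r - DD i (f - r), Submodule.sub_mem _ (X_mul_mem _ _ _ hr)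
      (DD_mem _ _ _ (Submodule.sub_mem _ h1 hr')), ?_⟩
    rw [eq_comm, ← sub_eq_zero, ← map_sub, PhiM_eq_zero_iff]
    intro k hk
    have e : X (Sum.inr i) * f - (X (Sum.inr i) * r - DD i (f - r))
      = X (Sum.inr i) * (f - r) + DD i (f - r) := by ring
    rw [e, map_add, Pi.add_apply, ← Phi_y]
    by_cases h12 : k i = 12
    · rw [h12, cA_thirteen, zero_mul]
    · rw [h0', mul_zero]
      intro j
      by_cases hj : j = i
      · subst hj; rw [Function.update_self]; have := hk j; omega
      · rw [Function.update_of_ne hj]; exact hk j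

lemma hc_X_mul (v : Fin 6 ⊕ Fin 6) (d : ℕ) (f : RR) :
    homogeneousComponent (d + 1) (X v * f) = X v * homogeneousComponent d f := by
  classical
  ext m
  rw [coeff_homogeneousComponent, coeff_X_mul', coeff_X_mul', coeff_homogeneousComponent]
  by_cases hv : v ∈ m.support
  · simp only [hv, if_true]
    have hle : Finsupp.single v 1 ≤ m := by
      rw [Finsupp.single_le_iff]
      exact Nat.one_le_iff_ne_zero.2 (Finsupp.mem_support_iff.1 hv)
    have h1 : m.degree = (m - Finsupp.single v 1).degree + 1 := by
      conv_lhs => rw [← tsub_add_cancel_of_le hle]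
      rw [map_add, Finsupp.degree_single]
    rw [h1]
    simp
  · simp [hv]

lemma bAct_hc (ε : Fin 6 → ℤˣ) (σ : Equiv.Perm (Fin 6)) (d : ℕ) (f : RR) :
    bAct 6 ε σ (homogeneousComponent d f) = homogeneousComponent d (bAct 6 ε σ f) := by
  induction f using ext_monomial with
  | h1 s c =>
    rw [bAct_monomial]
    have h1 : (monomial s c : RR).IsHomogeneous s.degree := isHomogeneous_monomial _ rfl
    have h2 : (monomial (s.mapDomain (Sum.map σ σ))
      (c * ∏ i, (((ε i : ℤ) : ℂ)) ^ (s (Sum.inl i) + s (Sum.inr i))) : RR).IsHomogeneous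
        s.degree := isHomogeneous_monomial _ (Finsupp.degree_mapDomain _ _)
    rw [homogeneousComponent_of_mem h1, homogeneousComponent_of_mem h2]
    split_ifs
    · rw [bAct_monomial]
    · simp
  | h2 p q hp hq => simp only [map_add, hp, hq]

lemma diag_hc (f : RR) (hf : f ∈ diagIdeal 6) :
    homogeneousComponent 0 f = 0 ∧ ∀ d, homogeneousComponent (d + 1) f ∈ GG d := by
  induction hf using Submodule.span_induction with
  | mem h hh =>
    obtain ⟨hinv, hc⟩ := hh
    refine ⟨?_, fun d => ?_⟩
    · rw [homogeneousComponent_zero, ← constantCoeff_eq, hc, C_0]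
    · refine ⟨?_, ?_⟩
      · rw [SetLike.mem_coe, mem_restrictTotalDegree]
        exact (homogeneousComponent_isHomogeneous _ _).totalDegree_le
      · obtain ⟨c, hc⟩ := Phi_inv (homogeneousComponent (d + 1) h)
          (fun ε σ => by rw [bAct_hc, hinv])
        refine ⟨C c, ?_, hc.symm⟩
        rw [SetLike.mem_coe, mem_restrictTotalDegree, totalDegree_C]
        exact Nat.zero_le _
  | zero => simp
  | add x y _ _ hx hy =>
    refine ⟨by rw [map_add, hx.1, hy.1, add_zero], fun d => ?_⟩
    rw [map_add]; exact Submodule.add_mem _ (hx.2 d) (hy.2 d)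
  | smul a x _ hx =>
    rw [smul_eq_mul]
    induction a using MvPolynomial.induction_on generalizing x with
    | C a =>
      refine ⟨by rw [homogeneousComponent_C_mul, hx.1, mul_zero], fun d => ?_⟩
      rw [homogeneousComponent_C_mul, ← smul_eq_C_mul]
      exact Submodule.smul_mem _ _ (hx.2 d)
    | add p q hp hq =>
      rename_i hxm
      have hp := hp x hxm hx
      have hq := hq x hxm hx
      rw [add_mul]
      refine ⟨by rw [map_add, hp.1, hq.1, add_zero], fun d => ?_⟩
      rw [map_add]; exact Submodule.add_mem _ (hp.2 d) (hq.2 d)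
    | mul_X p v hp =>
      rename_i hxm
      rw [mul_comm p, mul_assoc]
      have hp := hp x hxm hx
      refine ⟨?_, fun d => ?_⟩
      · rw [homogeneousComponent_zero, ← constantCoeff_eq, map_mul, constantCoeff_X, zero_mul, C_0]
      · rw [hc_X_mul]
        rcases d with _ | d
        · rw [hp.1, mul_zero]; exact Submodule.zero_mem _
        · exact X_mul_GG _ _ _ (hp.2 d)

lemma diag_hc_mem (f : RR) (hf : f ∈ diagIdeal 6) :
    ∀ d, homogeneousComponent d f ∈ diagIdeal 6 := by
  induction hf using Submodule.span_induction with
  | mem h hh =>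
    obtain ⟨hinv, hc⟩ := hh
    intro d
    apply Ideal.subset_span
    refine ⟨fun ε σ => by rw [bAct_hc, hinv], ?_⟩
    rw [constantCoeff_eq, coeff_homogeneousComponent]
    split_ifs
    · exact hc
    · rfl
  | zero => simp
  | add x y _ _ hx hy =>
    intro d
    rw [map_add]; exact Ideal.add_mem _ (hx d) (hy d)
  | smul a x _ hx =>
    rw [smul_eq_mul]
    induction a using MvPolynomial.induction_on generalizing x with
    | C a =>
      intro d
      rw [homogeneousComponent_C_mul]
      exact Ideal.mul_mem_left _ _ (hx d)
    | add p q hp hq =>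
      rename_i hxm
      intro d
      rw [add_mul, map_add]
      exact Ideal.add_mem _ (hp x hxm hx d) (hq x hxm hx d)
    | mul_X p v hp =>
      rename_i hxm
      rw [mul_comm p, mul_assoc]
      intro d
      rcases d with _ | d
      · rw [homogeneousComponent_zero, ← constantCoeff_eq, map_mul, constantCoeff_X, zero_mul, C_0]
        exact Ideal.zero_mem _
      · rw [hc_X_mul]
        exact Ideal.mul_mem_left _ _ (hp x hxm hx d)


noncomputable def eta (ε : Fin 6 → ℤˣ) : ℂ := ∏ i, (((ε i : ℤ) : ℂ))

lemma unit_sq (e : ℤˣ) : ((e : ℤ) : ℂ) * ((e : ℤ) : ℂ) = 1 := by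
  rw [← Int.cast_mul, ← Units.val_mul, Int.units_mul_self]; simp

lemma eta_sq (ε : Fin 6 → ℤˣ) : eta ε * eta ε = 1 := by
  unfold eta
  rw [← Finset.prod_mul_distrib]
  simp [unit_sq]

lemma eta_mul (ε ε' : Fin 6 → ℤˣ) : eta (ε * ε') = eta ε * eta ε' := by
  unfold eta
  rw [← Finset.prod_mul_distrib]
  simp

lemma eta_comp (ε : Fin 6 → ℤˣ) (σ : Equiv.Perm (Fin 6)) : eta (ε ∘ σ) = eta ε :=
  Equiv.prod_comp σ (fun i => (((ε i : ℤ) : ℂ)))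

lemma bAct_bAct (ε ε' : Fin 6 → ℤˣ) (σ σ' : Equiv.Perm (Fin 6)) (f : RR) :
    bAct 6 ε' σ' (bAct 6 ε σ f) = bAct 6 (ε * (ε' ∘ σ)) (σ' * σ) f := by
  have : (bAct 6 ε' σ').comp (bAct 6 ε σ) = bAct 6 (ε * (ε' ∘ σ)) (σ' * σ) := by
    apply algHom_ext
    rintro (i | i) <;> simp [bAct, smul_smul]
  rw [← this]; rfl

abbrev WW := (Fin 6 → ℤˣ) × Equiv.Perm (Fin 6)

lemma SS_exists : ∃ S : Finset WW, ∀ p, p ∈ S := ⟨Finset.univ, Finset.mem_univ⟩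

noncomputable def SS : Finset WW := Classical.choose SS_exists

lemma mem_SS (p : WW) : p ∈ SS := Classical.choose_spec SS_exists p

noncomputable def cW : ℂ := (SS.card : ℂ)

lemma cW_ne : cW ≠ 0 := Nat.cast_ne_zero.2 (Finset.card_pos.2 ⟨1, mem_SS 1⟩).ne'

lemma cW_sum (g : RR) : cW⁻¹ • (∑ _p ∈ SS, g) = g := by
  rw [Finset.sum_const, ← Nat.cast_smul_eq_nsmul ℂ, smul_smul]
  exact (congrArg (· • g) (inv_mul_cancel₀ cW_ne)).trans (one_smul ℂ g)

noncomputable def PP : RR →ₗ[ℂ] RR :=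
  cW⁻¹ • ∑ p ∈ SS, eta p.1 • (bAct 6 p.1 p.2).toLinearMap

lemma PP_apply (f : RR) :
    PP f = cW⁻¹ • ∑ p ∈ SS, eta p.1 • bAct 6 p.1 p.2 f := by
  simp only [PP, LinearMap.smul_apply, LinearMap.sum_apply, AlgHom.toLinearMap_apply]

def IsEta (g : RR) : Prop := ∀ ε σ, bAct 6 ε σ g = eta ε • g

lemma PP_eta (f : RR) : IsEta (PP f) := by
  intro ε' σ'
  rw [PP_apply, map_smul, map_sum, smul_comm]
  congr 1
  rw [Finset.smul_sum]
  refine Finset.sum_bijective (fun p : WW => ((p.1 * (ε' ∘ p.2), σ' * p.2) : WW)) ?_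
    (fun p => by simp only [mem_SS]) ?_
  · apply Finite.injective_iff_bijective.1
    rintro ⟨a, b⟩ ⟨c, d⟩ h
    simp only [Prod.mk.injEq, mul_right_inj] at h
    obtain ⟨h1, rfl⟩ := h
    rw [mul_left_inj] at h1
    rw [h1]
  · rintro ⟨ε, σ⟩ _
    simp only
    rw [map_smul, bAct_bAct, smul_smul, eta_mul, eta_comp]
    congr 1
    linear_combination -(eta ε) * eta_sq ε'

lemma PP_of_eta (g : RR) (hg : IsEta g) : PP g = g := by
  rw [PP_apply]
  have : ∀ p : WW, eta p.1 • bAct 6 p.1 p.2 g = g := fun p => by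
    rw [hg, smul_smul, eta_sq, one_smul]
  rw [Finset.sum_congr rfl fun p _ => this p, cW_sum]

lemma PP_mul (g h : RR) (hh : ∀ ε σ, bAct 6 ε σ h = h) : PP (g * h) = PP g * h := by
  rw [PP_apply, PP_apply, smul_mul_assoc, Finset.sum_mul]
  congr 1
  refine Finset.sum_congr rfl fun p _ => ?_
  rw [map_mul, hh, smul_mul_assoc]

lemma PP_deg (d : ℕ) (f : RR) (hf : f ∈ restrictTotalDegree (Fin 6 ⊕ Fin 6) ℂ d) :
    PP f ∈ restrictTotalDegree (Fin 6 ⊕ Fin 6) ℂ d := by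
  rw [PP_apply]
  apply Submodule.smul_mem
  apply Submodule.sum_mem
  intro p _
  apply Submodule.smul_mem
  rw [f.as_sum, map_sum]
  apply Submodule.sum_mem
  intro s hs
  rw [bAct_monomial, mem_restrictTotalDegree]
  rw [mem_restrictTotalDegree] at hf
  refine (totalDegree_monomial_le _ _).trans (le_trans ?_ ((le_totalDegree hs).trans hf))
  change (s.mapDomain _).degree ≤ s.degree
  rw [Finsupp.degree_mapDomain]

/-! ### the delta-isotypic part of the module -/

def Nd : Submodule ℂ NN where
  carrier := {u | Anti u ∧ ∀ k i, ¬ Even (k i) → u k = 0}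
  add_mem' := by
    rintro u v ⟨hu, hu'⟩ ⟨hv, hv'⟩
    refine ⟨fun σ k => ?_, fun k i hi => ?_⟩
    · simp only [Pi.add_apply, hu σ k, hv σ k]; ring
    · simp [hu' k i hi, hv' k i hi]
  zero_mem' := ⟨fun σ k => by simp, fun k i _ => rfl⟩
  smul_mem' := by
    rintro c u ⟨hu, hu'⟩
    refine ⟨fun σ k => ?_, fun k i hi => ?_⟩
    · simp only [Pi.smul_apply, hu σ k, smul_eq_mul]; ring
    · simp [hu' k i hi]

def Md : Submodule ℂ MM := Nd.map tau

lemma Phi_eta (g : RR) (hg : IsEta g) : Phi g ∈ Nd := by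
  constructor
  · intro σ k
    have h1 := Phi_bAct 1 σ g k
    rw [hg] at h1
    simp only [Pi.one_apply, Units.val_one, Int.cast_one, one_pow, Finset.prod_const_one,
      mul_one, eta, one_smul] at h1
    rw [h1, ← mul_assoc, unit_sq, one_mul]
  · intro k i hi
    have h1 := Phi_bAct (Function.update 1 i (-1)) 1 g k
    have h2 : eta (Function.update 1 i (-1)) = -1 := by
      have := sign_flip i (fun _ => 1)
      simpa [eta] using this
    rw [hg, h2] at h1
    simp only [Equiv.Perm.coe_one, id, Function.comp_id] at h1
    rw [sign_flip i (fun j => k j + 1),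
      Even.neg_one_pow (Odd.add_one (Nat.not_even_iff_odd.1 hi))] at h1
    simp at h1
    have : (2 : ℂ) * Phi g k = 0 := by linear_combination -h1
    simpa using this

lemma PhiM_eta (g : RR) (hg : IsEta g) : PhiM g ∈ Md := ⟨_, Phi_eta g hg, rfl⟩

lemma e0_lt (t : Fin 7) (i : Fin 6) : e0 t i < 13 := by
  unfold e0; omega

def evd : MM →ₗ[ℂ] (Fin 7 → ℂ) where
  toFun m := fun t => m (fun i => ⟨e0 t i, e0_lt t i⟩)
  map_add' _ _ := rfl
  map_smul' _ _ := rfl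

lemma finrank_Md : Module.finrank ℂ Md ≤ 7 := by
  have h : Function.Injective (evd.domRestrict Md) := by
    rw [injective_iff_map_eq_zero]
    rintro ⟨_, u, hu, rfl⟩ h
    have h1 := anti_even u hu.1 hu.2 (fun t => congrFun h t)
    apply Subtype.ext
    funext k
    exact h1 _ (fun j => Nat.le_of_lt_succ (k j).2)
  have := LinearMap.finrank_le_finrank_of_injective h
  simpa using this

/-! ### coefficients -/

noncomputable def ex (x y : Fin 6 → ℕ) : Fin 6 ⊕ Fin 6 →₀ ℕ :=
  Finsupp.equivFunOnFinite.symm (Sum.elim x y)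

lemma ex_inl (x y : Fin 6 → ℕ) (i : Fin 6) : ex x y (Sum.inl i) = x i := rfl
lemma ex_inr (x y : Fin 6 → ℕ) (i : Fin 6) : ex x y (Sum.inr i) = y i := rfl

lemma ex_le (x y x' y' : Fin 6 → ℕ) :
    ex x y ≤ ex x' y' ↔ ∀ i, x i ≤ x' i ∧ y i ≤ y' i := by
  rw [Finsupp.le_def]
  constructor
  · intro h i; exact ⟨h (Sum.inl i), h (Sum.inr i)⟩
  · rintro h (i | i)
    · exact (h i).1
    · exact (h i).2

lemma ex_sub (x y x' y' : Fin 6 → ℕ) : ex x y - ex x' y' = ex (x - x') (y - y') := by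
  ext v
  rcases v with i | i <;> rfl

lemma map_inj (σ : Equiv.Perm (Fin 6)) :
    Function.Injective (Sum.map σ σ : Fin 6 ⊕ Fin 6 → Fin 6 ⊕ Fin 6) :=
  Function.Injective.sumMap σ.injective σ.injective

lemma coeff_bAct (ε : Fin 6 → ℤˣ) (σ : Equiv.Perm (Fin 6)) (m : Fin 6 ⊕ Fin 6 →₀ ℕ) (g : RR) :
    coeff (m.mapDomain (Sum.map σ σ)) (bAct 6 ε σ g)
      = (∏ i, (((ε i : ℤ) : ℂ)) ^ (m (Sum.inl i) + m (Sum.inr i))) * coeff m g := by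
  classical
  induction g using ext_monomial with
  | h1 s c =>
    rw [bAct_monomial, coeff_monomial, coeff_monomial]
    by_cases h : s = m
    · subst h; simp [mul_comm]
    · rw [if_neg h, if_neg, mul_zero]
      exact fun h' => h (Finsupp.mapDomain_injective (map_inj σ) h')
  | h2 p q hp hq => rw [map_add, coeff_add, coeff_add, hp, hq, mul_add]

lemma eta_coeff_even (g : RR) (hg : IsEta g) (m : Fin 6 ⊕ Fin 6 →₀ ℕ) (i : Fin 6)
    (hi : Even (m (Sum.inl i) + m (Sum.inr i))) : coeff m g = 0 := by
  have h1 := coeff_bAct (Function.update 1 i (-1)) 1 m g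
  have h2 : eta (Function.update 1 i (-1)) = -1 := by
    have := sign_flip i (fun _ => 1)
    simpa [eta] using this
  rw [hg, h2, sign_flip i (fun j => m (Sum.inl j) + m (Sum.inr j)), hi.neg_one_pow] at h1
  simp at h1
  have : (2 : ℂ) * coeff m g = 0 := by linear_combination -h1
  simpa using this

lemma eta_coeff_perm (g : RR) (hg : IsEta g) (σ : Equiv.Perm (Fin 6)) (x y x' y' : Fin 6 → ℕ)
    (h : ∀ i, x' (σ i) = x i ∧ y' (σ i) = y i) : coeff (ex x' y') g = coeff (ex x y) g := by
  have h1 := coeff_bAct 1 σ (ex x y) g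
  have h2 : (ex x y).mapDomain (Sum.map σ σ) = ex x' y' := by
    ext v
    rcases v with i | i
    · have := Finsupp.mapDomain_apply (map_inj σ) (ex x y) (Sum.inl (σ.symm i))
      simp only [Sum.map_inl, Equiv.apply_symm_apply] at this
      rw [this, ex_inl, ex_inl, ← (h _).1, Equiv.apply_symm_apply]
    · have := Finsupp.mapDomain_apply (map_inj σ) (ex x y) (Sum.inr (σ.symm i))
      simp only [Sum.map_inr, Equiv.apply_symm_apply] at this
      rw [this, ex_inr, ex_inr, ← (h _).2, Equiv.apply_symm_apply]
  rw [h2, hg] at h1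
  simpa [eta] using h1

def m6x (j : Fin 7) (i : Fin 6) : ℕ := if (i : ℕ) < j then 1 else 0
def m6y (j : Fin 7) (i : Fin 6) : ℕ := if (i : ℕ) < j then 0 else 1
def m8x (w : Fin 3) (r : Fin 4) (i : Fin 6) : ℕ :=
  if i = 0 then (r : ℕ) else if (i : ℕ) + r ≤ w + 3 then 1 else 0
def m8y (w : Fin 3) (r : Fin 4) (i : Fin 6) : ℕ :=
  if i = 0 then 3 - (r : ℕ) else if (i : ℕ) + r ≤ w + 3 then 0 else 1
def exx (ρ : Fin 3) (i : Fin 6) : ℕ := if i = 0 then (ρ : ℕ) else 0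
def exy (ρ : Fin 3) (i : Fin 6) : ℕ := if i = 0 then 2 - (ρ : ℕ) else 0

noncomputable def kap : RR →ₗ[ℂ] (Fin 7 ⊕ Fin 3 → ℂ) where
  toFun f := Sum.elim (fun j => coeff (ex (m6x j) (m6y j)) f)
    (fun w => ∑ r : Fin 4, (-1) ^ (r : ℕ) * coeff (ex (m8x w r) (m8y w r)) f)
  map_add' f g := by
    funext i
    rcases i with j | w
    · simp
    · simp [mul_add, Finset.sum_add_distrib]
  map_smul' c f := by
    funext i
    rcases i with j | w
    · simp
    · simp only [coeff_smul, Sum.elim_inr, Pi.smul_apply, smul_eq_mul, Finset.mul_sum,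
        RingHom.id_apply]
      exact Finset.sum_congr rfl fun r _ => by ring

lemma m6_vanish (g h : RR) (hg : IsEta g) (hh : constantCoeff h = 0) (j : Fin 7) :
    coeff (ex (m6x j) (m6y j)) (g * h) = 0 := by
  classical
  rw [coeff_mul]
  apply Finset.sum_eq_zero
  rintro ⟨p, q⟩ hpq
  rw [Finset.HasAntidiagonal.mem_antidiagonal] at hpq
  by_cases hp : ∃ i, Even (p (Sum.inl i) + p (Sum.inr i))
  · obtain ⟨i, hi⟩ := hp
    rw [eta_coeff_even g hg p i hi, zero_mul]
  · push Not at hp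
    have hq : q = 0 := by
      have key : ∀ i, q (Sum.inl i) = 0 ∧ q (Sum.inr i) = 0 := by
        intro i
        have h1 := Nat.not_even_iff.1 (hp i)
        have h2 := DFunLike.congr_fun hpq (Sum.inl i)
        have h3 := DFunLike.congr_fun hpq (Sum.inr i)
        rw [ex_inl, m6x] at h2
        rw [ex_inr, m6y] at h3
        simp only [Finsupp.add_apply] at h2 h3
        split_ifs at h2 h3 <;> omega
      ext v
      rcases v with i | i
      · exact (key i).1
      · exact (key i).2
    subst hq
    rw [constantCoeff_eq] at hh
    simp only [hh, mul_zero]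

lemma m8_vanish (g h : RR) (hg : IsEta g) (hh : coeff 0 h = 0)
    (hρ : ∀ ρ, coeff (ex (exx ρ) (exy ρ)) h = 0) (w : Fin 3) (r : Fin 4) :
    coeff (ex (m8x w r) (m8y w r)) (g * h) = 0 := by
  classical
  rw [coeff_mul]
  apply Finset.sum_eq_zero
  rintro ⟨p, q⟩ hpq
  rw [Finset.HasAntidiagonal.mem_antidiagonal] at hpq
  by_cases hp : ∃ i, Even (p (Sum.inl i) + p (Sum.inr i))
  · obtain ⟨i, hi⟩ := hp
    rw [eta_coeff_even g hg p i hi, zero_mul]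
  · push Not at hp
    have key : ∀ i ≠ 0, q (Sum.inl i) = 0 ∧ q (Sum.inr i) = 0 := by
      intro i hi
      have h1 := Nat.not_even_iff.1 (hp i)
      have h2 := DFunLike.congr_fun hpq (Sum.inl i)
      have h3 := DFunLike.congr_fun hpq (Sum.inr i)
      rw [ex_inl, m8x, if_neg hi] at h2
      rw [ex_inr, m8y, if_neg hi] at h3
      simp only [Finsupp.add_apply] at h2 h3
      split_ifs at h2 h3 <;> omega
    have h1 := Nat.not_even_iff.1 (hp 0)
    have h2 := DFunLike.congr_fun hpq (Sum.inl 0)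
    have h3 := DFunLike.congr_fun hpq (Sum.inr 0)
    rw [ex_inl, m8x, if_pos rfl] at h2
    rw [ex_inr, m8y, if_pos rfl] at h3
    simp only [Finsupp.add_apply] at h2 h3
    have hr := r.2
    have hc : q (Sum.inl 0) + q (Sum.inr 0) = 0 ∨ q (Sum.inl 0) + q (Sum.inr 0) = 2 := by omega
    have hq : coeff q h = 0 := by
      rcases hc with hc | hc
      · have : q = 0 := by
          ext v
          rcases v with i | i
          · by_cases hi : i = 0
            · subst hi; simp only [Finsupp.coe_zero, Pi.zero_apply]; omega
            · exact (key i hi).1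
          · by_cases hi : i = 0
            · subst hi; simp only [Finsupp.coe_zero, Pi.zero_apply]; omega
            · exact (key i hi).2
        rw [this, hh]
      · have hlt : q (Sum.inl 0) < 3 := by omega
        have : q = ex (exx ⟨q (Sum.inl 0), hlt⟩) (exy ⟨q (Sum.inl 0), hlt⟩) := by
          ext v
          rcases v with i | i
          · rw [ex_inl, exx]
            by_cases hi : i = 0
            · subst hi; simp
            · rw [if_neg hi]; exact (key i hi).1
          · rw [ex_inr, exy]
            by_cases hi : i = 0
            · subst hi; simp only [if_true]; omega
            · rw [if_neg hi]; exact (key i hi).2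
        rw [this, hρ]
    simp only [hq, mul_zero]

lemma m8_coeff (g : RR) (c : ℂ) (w : Fin 3) (r : Fin 4) (ρ : Fin 3) :
    coeff (ex (m8x w r) (m8y w r)) (g * monomial (ex (exx ρ) (exy ρ)) c)
      = if (r : ℕ) = ρ ∨ (r : ℕ) = ρ + 1 then
          coeff (ex (m8x w r - exx ρ) (m8y w r - exy ρ)) g * c else 0 := by
  rw [coeff_mul_monomial', ex_sub]
  congr 1
  rw [ex_le]
  apply propext
  revert w r ρ
  decide

lemma m8_mono_vanish (g : RR) (hg : IsEta g) (c : ℂ) (w ρ : Fin 3) :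
    ∑ r : Fin 4, (-1) ^ (r : ℕ) *
      coeff (ex (m8x w r) (m8y w r)) (g * monomial (ex (exx ρ) (exy ρ)) c) = 0 := by
  have key : coeff (ex (m8x w ρ.castSucc - exx ρ) (m8y w ρ.castSucc - exy ρ)) g
      = coeff (ex (m8x w ρ.succ - exx ρ) (m8y w ρ.succ - exy ρ)) g := by
    apply eta_coeff_perm g hg (Equiv.swap 0 ⟨w + 3 - ρ, by omega⟩)
    revert w ρ
    decide
  rw [Fin.sum_univ_four]
  simp only [m8_coeff]
  fin_cases ρ <;> simp at key ⊢ <;> rw [key] <;> ring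

lemma kap_vanish (g h : RR) (hg : IsEta g) (hh : constantCoeff h = 0) : kap (g * h) = 0 := by
  classical
  funext i
  rcases i with j | w
  · exact m6_vanish g h hg hh j
  · change ∑ r : Fin 4, (-1) ^ (r : ℕ) * coeff (ex (m8x w r) (m8y w r)) (g * h) = 0
    have hinj : ∀ ρ ρ', ex (exx ρ) (exy ρ) = ex (exx ρ') (exy ρ') → ρ = ρ' := by
      intro ρ ρ' he
      have := DFunLike.congr_fun he (Sum.inl 0)
      simp only [ex_inl, exx, if_true] at this
      exact Fin.ext this
    have hne : ∀ ρ, ex (exx ρ) (exy ρ) ≠ 0 := by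
      intro ρ he
      have h1 := DFunLike.congr_fun he (Sum.inl 0)
      have h2 := DFunLike.congr_fun he (Sum.inr 0)
      simp only [ex_inl, exx, ex_inr, exy, if_true, Finsupp.coe_zero, Pi.zero_apply] at h1 h2
      omega
    let s := ∑ ρ : Fin 3, monomial (ex (exx ρ) (exy ρ)) (coeff (ex (exx ρ) (exy ρ)) h)
    have e : g * h = g * (h - s) + ∑ ρ : Fin 3, g * monomial (ex (exx ρ) (exy ρ))
        (coeff (ex (exx ρ) (exy ρ)) h) := by
      rw [← Finset.mul_sum]; ring
    have h1 : coeff 0 (h - s) = 0 := by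
      rw [constantCoeff_eq] at hh
      simp only [coeff_sub, hh, s, coeff_sum, coeff_monomial, hne]
      simp
    have h2 : ∀ ρ, coeff (ex (exx ρ) (exy ρ)) (h - s) = 0 := by
      intro ρ
      simp only [coeff_sub, s, coeff_sum, coeff_monomial]
      rw [Finset.sum_eq_single ρ]
      · simp
      · intro b _ hb
        rw [if_neg (fun he => hb (hinj _ _ he))]
      · simp
    rw [e]
    simp only [coeff_add, m8_vanish g _ hg h1 h2, zero_add, coeff_sum, Finset.mul_sum]
    rw [Finset.sum_comm]
    exact Finset.sum_eq_zero fun ρ _ => m8_mono_vanish g hg _ w ρ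

lemma kap_PP_diag0 (f : RR) (hf : f ∈ diagIdeal 6) : ∀ a, kap (PP (a * f)) = 0 := by
  induction hf using Submodule.span_induction with
  | mem h hh =>
    intro a
    rw [PP_mul a h hh.1]
    exact kap_vanish _ _ (PP_eta _) hh.2
  | zero => intro a; rw [mul_zero, map_zero, map_zero]
  | add x y _ _ hx hy => intro a; rw [mul_add, map_add, map_add, hx, hy, add_zero]
  | smul b x _ hx => intro a; rw [smul_eq_mul, ← mul_assoc]; exact hx _

lemma kap_PP_diag (f : RR) (hf : f ∈ diagIdeal 6) : kap (PP f) = 0 := by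
  have := kap_PP_diag0 f hf 1
  rwa [one_mul] at this


def bx : Fin 7 ⊕ Fin 3 → Fin 6 → ℕ := Sum.elim m6x (fun w => m8x w 0)
def bY : Fin 7 ⊕ Fin 3 → Fin 6 → ℕ := Sum.elim m6y (fun w => m8y w 0)

lemma coeff_PP_zero (x y x' y' : Fin 6 → ℕ)
    (h : ¬ (∑ i, x i = ∑ i, x' i ∧ ∑ i, y i ^ 2 = ∑ i, y' i ^ 2)) :
    coeff (ex x' y') (PP (monomial (ex x y) 1)) = 0 := by
  classical
  rw [PP_apply, coeff_smul, coeff_sum]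
  rw [Finset.sum_eq_zero, smul_zero]
  rintro ⟨ε, σ⟩ _
  rw [coeff_smul, bAct_monomial, coeff_monomial, if_neg, smul_zero]
  intro he
  have h1 : ∀ i, x' (σ i) = x i := fun i => by
    rw [← ex_inl x' y', ← he]
    exact Finsupp.mapDomain_apply (map_inj σ) (ex x y) (Sum.inl i)
  have h2 : ∀ i, y' (σ i) = y i := fun i => by
    rw [← ex_inr x' y', ← he]
    exact Finsupp.mapDomain_apply (map_inj σ) (ex x y) (Sum.inr i)
  apply h
  constructor
  · rw [← Equiv.sum_comp σ x']; simp only [h1]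
  · rw [← Equiv.sum_comp σ (fun i => y' i ^ 2)]; simp only [h2]

lemma coeff_PP_self (x y : Fin 6 → ℕ) (ho : ∀ i, Odd (x i + y i)) :
    coeff (ex x y) (PP (monomial (ex x y) 1)) ≠ 0 := by
  classical
  rw [PP_apply, coeff_smul, coeff_sum]
  have key : ∀ p : WW, coeff (ex x y) (eta p.1 • bAct 6 p.1 p.2 (monomial (ex x y) 1))
      = (((if (ex x y).mapDomain (Sum.map p.2 p.2) = ex x y then 1 else 0 : ℕ)) : ℂ) := by
    rintro ⟨ε, σ⟩
    rw [coeff_smul, bAct_monomial, coeff_monomial]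
    simp only
    split_ifs
    · have : ∏ i, (((ε i : ℤ) : ℂ)) ^ (ex x y (Sum.inl i) + ex x y (Sum.inr i)) = eta ε := by
        unfold eta
        refine Finset.prod_congr rfl fun i _ => ?_
        rw [ex_inl, ex_inr]
        obtain ⟨k, hk⟩ := ho i
        rw [hk, pow_succ, pow_mul, pow_two, unit_sq, one_pow, one_mul]
      rw [this]
      simp [eta_sq]
    · simp
  rw [Finset.sum_congr rfl fun p _ => key p, ← Nat.cast_sum, smul_eq_mul]
  refine mul_ne_zero (inv_ne_zero cW_ne) (Nat.cast_ne_zero.2 ?_)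
  intro h0
  rw [Finset.sum_eq_zero_iff] at h0
  have := h0 ((1, 1) : WW) (mem_SS _)
  simp at this

lemma inv6 : ∀ (i : Fin 7 ⊕ Fin 3) (j : Fin 7), i ≠ Sum.inl j →
   ¬ (∑ a, bx i a = ∑ a, m6x j a ∧ ∑ a, bY i a ^ 2 = ∑ a, m6y j a ^ 2) := by decide
lemma inv8 : ∀ (i : Fin 7 ⊕ Fin 3) (w : Fin 3) (r : Fin 4), (i ≠ Sum.inr w ∨ r ≠ 0) →
   ¬ (∑ a, bx i a = ∑ a, m8x w r a ∧ ∑ a, bY i a ^ 2 = ∑ a, m8y w r a ^ 2) := by decide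
lemma odd6 : ∀ (i : Fin 7 ⊕ Fin 3) (a : Fin 6), Odd (bx i a + bY i a) := by decide

lemma kap_base (i : Fin 7 ⊕ Fin 3) : ∃ c : ℂ, c ≠ 0 ∧
    kap (PP (monomial (ex (bx i) (bY i)) 1)) = Pi.single i c := by
  refine ⟨_, coeff_PP_self (bx i) (bY i) (odd6 i), ?_⟩
  funext k
  rcases k with j | w
  · change coeff (ex (m6x j) (m6y j)) (PP (monomial (ex (bx i) (bY i)) 1)) = _
    by_cases h : i = Sum.inl j
    · subst h; rw [Pi.single_eq_same]; rfl
    · rw [Pi.single_eq_of_ne (Ne.symm h)]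
      exact coeff_PP_zero _ _ _ _ (inv6 i j h)
  · change ∑ r : Fin 4, (-1) ^ (r : ℕ) * coeff (ex (m8x w r) (m8y w r)) (PP (monomial (ex (bx i) (bY i)) 1)) = _
    by_cases h : i = Sum.inr w
    · rw [Finset.sum_eq_single 0]
      · subst h; rw [Pi.single_eq_same]; simp [bx, bY]
      · intro r _ hr
        rw [coeff_PP_zero _ _ _ _ (inv8 i w r (Or.inr hr)), mul_zero]
      · simp
    · rw [Pi.single_eq_of_ne (Ne.symm h)]
      refine Finset.sum_eq_zero fun r _ => ?_
      rw [coeff_PP_zero _ _ _ _ (inv8 i w r (Or.inl h)), mul_zero]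

lemma kap_PP_surj (q : Fin 7 ⊕ Fin 3 → ℂ) : ∃ f, kap (PP f) = q := by
  choose c hc hk using kap_base
  refine ⟨∑ i, (q i * (c i)⁻¹) • monomial (ex (bx i) (bY i)) 1, ?_⟩
  simp only [map_sum, map_smul, hk]
  funext k
  rw [Finset.sum_apply, Finset.sum_eq_single k]
  · rw [Pi.smul_apply, Pi.single_eq_same, smul_eq_mul, mul_assoc, inv_mul_cancel₀ (hc k), mul_one]
  · intro b _ hb
    rw [Pi.smul_apply, Pi.single_eq_of_ne (Ne.symm hb), smul_zero]
  · simp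

noncomputable def Psi : RR →ₗ[ℂ] (MM ⧸ Md) × (Fin 7 ⊕ Fin 3 → ℂ) :=
  LinearMap.prod (Md.mkQ ∘ₗ PhiM) (kap ∘ₗ PP)

lemma Psi_fst (f : RR) : (Psi f).1 = Md.mkQ (PhiM f) := rfl
lemma Psi_snd (f : RR) : (Psi f).2 = kap (PP f) := rfl

lemma mkQ_PP (f : RR) : Md.mkQ (PhiM (PP f)) = 0 := by
  rw [Submodule.mkQ_apply, Submodule.Quotient.mk_eq_zero]
  exact PhiM_eta _ (PP_eta f)

lemma PP_PP (f : RR) : PP (PP f) = PP f := PP_of_eta _ (PP_eta f)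

lemma Psi_surj : Function.Surjective Psi := by
  rintro ⟨m, q⟩
  obtain ⟨m, rfl⟩ := Md.mkQ_surjective m
  obtain ⟨f1, rfl⟩ := PhiM_surj m
  obtain ⟨f2, rfl⟩ := kap_PP_surj q
  refine ⟨f1 - PP f1 + PP f2, Prod.ext ?_ ?_⟩
  · rw [Psi_fst, map_add, map_sub, map_add, map_sub, mkQ_PP, mkQ_PP, sub_zero, add_zero]
  · rw [Psi_snd, map_add, map_sub, PP_PP, PP_PP, sub_self, zero_add]

lemma Psi_diag (f : RR) (hf : f ∈ diagIdeal 6) (d : ℕ) :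
    ∃ r ∈ restrictTotalDegree (Fin 6 ⊕ Fin 6) ℂ d,
      Psi (homogeneousComponent (d + 1) f) = Psi r := by
  obtain ⟨r, hr, hr'⟩ := ((diag_hc f hf).2 d).2
  refine ⟨r - PP r, Submodule.sub_mem _ hr (PP_deg d r hr), Prod.ext ?_ ?_⟩
  · rw [Psi_fst, Psi_fst, map_sub, map_sub, mkQ_PP, sub_zero, hr']
  · rw [Psi_snd, Psi_snd, map_sub, PP_PP, sub_self, map_zero]
    exact kap_PP_diag _ (diag_hc_mem f hf _)

/-- For `n = 6`, `dim_ℂ R_W ≥ 13⁶ + 3` for the diagonal coinvariant ring of `W(B₆)`. -/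
theorem dim_diag_coinv_B6 :
    13 ^ 6 + 3 ≤ Module.finrank ℂ (MvPolynomial (Fin 6 ⊕ Fin 6) ℂ ⧸ diagIdeal 6) := by
  have h := main_dim (diagIdeal 6) (fun f hf => (diag_hc f hf).1) Psi Psi_surj Psi_diag
  have h1 := Submodule.finrank_quotient_add_finrank Md
  have h2 : Module.finrank ℂ MM = 13 ^ 6 := by
    rw [Module.finrank_fintype_fun_eq_card, Fintype.card_fun, Fintype.card_fin, Fintype.card_fin]
  have h3 := finrank_Md
  rw [Module.finrank_prod, Module.finrank_fintype_fun_eq_card, Fintype.card_sum,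
    Fintype.card_fin, Fintype.card_fin] at h
  rw [h2] at h1
  refine le_trans ?_ h
  omega
end

section
/- For every integer n ≥ 4, the complex dimension of the diagonal coinvariant ring R_W of the Weyl group W(B_n) strictly exceeds (2n+1)^n; that is, dim_ℂ R_W ≥ (2n+1)^n + 1. -/
open MvPolynomial

namespace DiagB

open Finset

/-- weight of the lowering operator -/
noncomputable def pw (k : ℤ) : ℂ := if Even k then 1 else (k : ℂ) + 1

/-- weight of the raising operator -/
noncomputable def qw (n : ℕ) (k : ℤ) : ℂ := if Even k then 1 else (k : ℂ) - (2 * n + 1)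

noncomputable def ww (n a b : ℕ) (k : ℤ) : ℂ :=
  (∏ t ∈ range a, pw (k + t)) * ∏ t ∈ range b, qw n (k + a - t)

/-- the alternating vector -/
noncomputable def vv (n : ℕ) (m : Fin n → ℤ) : ℂ :=
  Matrix.det (Matrix.of fun i j : Fin n => if m i = 2 * (j : ℕ) + 1 then (1 : ℂ) else 0)

/-- the image of the monomial with exponent `s` -/
noncomputable def uu (n : ℕ) (s : Fin n ⊕ Fin n →₀ ℕ) (m : Fin n → ℤ) : ℂ :=
  (∏ i, ww n (s (Sum.inl i)) (s (Sum.inr i)) (m i)) *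
    vv n (fun i => m i + s (Sum.inl i) - s (Sum.inr i))

noncomputable def Xop (n : ℕ) (i : Fin n) : ((Fin n → ℤ) → ℂ) →ₗ[ℂ] ((Fin n → ℤ) → ℂ) where
  toFun g := fun m => pw (m i) * g (m + Pi.single i 1)
  map_add' g h := by ext m; simp [mul_add]
  map_smul' c g := by ext m; simp [mul_left_comm]

noncomputable def Yop (n : ℕ) (i : Fin n) : ((Fin n → ℤ) → ℂ) →ₗ[ℂ] ((Fin n → ℤ) → ℂ) where
  toFun g := fun m => qw n (m i) * g (m - Pi.single i 1)
  map_add' g h := by ext m; simp [mul_add]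
  map_smul' c g := by ext m; simp [mul_left_comm]

lemma prod_upd {n : ℕ} (i : Fin n) (f g : Fin n → ℂ) (c d : ℂ) (h : ∀ j, j ≠ i → f j = g j)
    (hi : c * f i = d * g i) : c * ∏ j, f j = d * ∏ j, g j := by
  rw [← mul_prod_erase univ f (mem_univ i), ← mul_prod_erase univ g (mem_univ i), ← mul_assoc,
    ← mul_assoc, hi]
  congr 1
  exact prod_congr rfl fun j hj => h j (ne_of_mem_erase hj)

lemma pq (n : ℕ) (k : ℤ) : pw k * qw n (k + 1) = if Even k then (k : ℂ) - 2 * n else k + 1 := by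
  unfold pw qw
  by_cases h : Even k
  · simp [h, Int.even_add_one]
  · simp [h, Int.even_add_one]

lemma ww_x (n a b : ℕ) (k : ℤ) : pw k * ww n a b (k + 1) = ww n (a + 1) b k := by
  unfold ww
  rw [prod_range_succ' (fun t : ℕ => pw (k + t))]
  have : ∀ t : ℕ, k + 1 + (t : ℤ) = k + ((t + 1 : ℕ) : ℤ) := by intro t; push_cast; ring
  simp only [this]
  have : ∀ t : ℕ, k + ((a + 1 : ℕ) : ℤ) - (t : ℤ) = k + 1 + a - t := by intro t; push_cast; ring
  simp only [this]
  simp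
  ring

lemma ww_y (n a b : ℕ) (k : ℤ) : qw n (k + a - b) * ww n a b k = ww n a (b + 1) k := by
  unfold ww
  rw [prod_range_succ]
  ring

lemma ww_y' (n a b : ℕ) (k : ℤ) :
    ww n (a + 1) (b + 1) k = pw (k + a) * qw n (k + a + 1) * ww n a b k := by
  unfold ww
  rw [prod_range_succ, prod_range_succ']
  have : ∀ t : ℕ, k + ((a + 1 : ℕ) : ℤ) - ((t + 1 : ℕ) : ℤ) = k + a - t := by
    intro t; push_cast; ring
  simp only [this]
  have : k + ((a + 1 : ℕ) : ℤ) - ((0 : ℕ) : ℤ) = k + a + 1 := by push_cast; ring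
  rw [this]; ring

lemma Xop_uu (n : ℕ) (i : Fin n) (s : Fin n ⊕ Fin n →₀ ℕ) :
    Xop n i (uu n s) = uu n (s + Finsupp.single (Sum.inl i) 1) := by
  ext m
  simp only [Xop, LinearMap.coe_mk, AddHom.coe_mk, uu]
  rw [← mul_assoc]
  congr 1
  · rw [← one_mul (∏ i_1, ww n ((s + Finsupp.single (Sum.inl i) 1 : Fin n ⊕ Fin n →₀ ℕ) (Sum.inl i_1)) _ _)]
    apply prod_upd i
    · intro j hj
      simp [hj, Ne.symm hj, Finsupp.single_apply]
    · simp [ww_x]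
  · congr 1
    ext j
    by_cases hj : j = i
    · subst hj; simp; ring
    · simp [hj, Ne.symm hj, Finsupp.single_apply]

/-- commutator coefficient -/
noncomputable def cc (n a b : ℕ) : ℂ :=
  if Odd a then -(a + 1) else if Odd b then 2 * n - a else -(2 * n + 2 + a)

lemma cc_spec (n a b : ℕ) (k : ℤ) (h : Odd (k + a - b)) :
    qw n k * pw (k - 1) - pw (k + a) * qw n (k + a + 1) = cc n a b := by
  have h1 : qw n k * pw (k - 1) = pw (k - 1) * qw n (k - 1 + 1) := by rw [mul_comm]; simp
  rw [h1, pq, pq]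
  unfold cc
  rcases Int.even_or_odd k with hk | hk <;> rcases Nat.even_or_odd a with ha | ha <;>
    rcases Nat.even_or_odd b with hb | hb <;>
    simp [Int.even_sub, Int.odd_sub, Int.even_add, Int.odd_add, hk, ha, hb,
      Int.not_even_iff_odd.mpr, Nat.not_even_iff_odd.mpr, Nat.not_odd_iff_even.mpr,
      Int.not_odd_iff_even.mpr] at h ⊢ <;> ring

lemma vv_ne (n : ℕ) (m : Fin n → ℤ) (h : vv n m ≠ 0) (i : Fin n) :
    ∃ j : Fin n, m i = 2 * (j : ℕ) + 1 := by
  by_contra hc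
  push Not at hc
  apply h
  apply Matrix.det_eq_zero_of_row_eq_zero i
  intro j
  simp [hc j]

lemma vv_perm (n : ℕ) (m : Fin n → ℤ) (σ : Equiv.Perm (Fin n)) :
    vv n (fun i => m (σ i)) = ((Equiv.Perm.sign σ : ℤ) : ℂ) * vv n m := by
  unfold vv
  rw [← Matrix.det_permute]
  rfl

lemma vv_std (n : ℕ) : vv n (fun i => 2 * (i : ℕ) + 1) = 1 := by
  unfold vv
  rw [← Matrix.det_one (n := Fin n) (R := ℂ)]
  refine congrArg Matrix.det ?_
  ext i j
  simp [Matrix.one_apply, Fin.ext_iff]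

lemma Yop_uu (n : ℕ) (i : Fin n) (s : Fin n ⊕ Fin n →₀ ℕ) :
    ∃ c : ℂ, Yop n i (uu n s) = uu n (s + Finsupp.single (Sum.inr i) 1)
      + c • uu n (s - Finsupp.single (Sum.inl i) 1) ∧ (s (Sum.inl i) = 0 → c = 0) := by
  have hv : ∀ m : Fin n → ℤ, (fun j => (m - Pi.single i 1 : Fin n → ℤ) j + s (Sum.inl j) - s (Sum.inr j)) =
      (fun j => m j + (s + Finsupp.single (Sum.inr i) 1 : Fin n ⊕ Fin n →₀ ℕ) (Sum.inl j)
        - ((s + Finsupp.single (Sum.inr i) 1 : Fin n ⊕ Fin n →₀ ℕ) (Sum.inr j) : ℕ)) := by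
    intro m; ext j
    by_cases hj : j = i
    · subst hj; simp; ring
    · simp [hj, Ne.symm hj, Finsupp.single_apply]
  rcases Nat.eq_zero_or_pos (s (Sum.inl i)) with h0 | h0
  · refine ⟨0, ?_, fun _ => rfl⟩
    ext m
    simp only [Yop, LinearMap.coe_mk, AddHom.coe_mk, uu, zero_smul, add_zero]
    rw [← mul_assoc, hv]
    congr 1
    rw [← one_mul (∏ i_1, ww n ((s + Finsupp.single (Sum.inr i) 1 : Fin n ⊕ Fin n →₀ ℕ) (Sum.inl i_1)) _ _)]
    apply prod_upd i
    · intro j hj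
      simp [hj, Ne.symm hj, Finsupp.single_apply]
    · simp [h0]
      unfold ww
      rw [prod_range_succ']
      have : ∀ t : ℕ, m i + ((0 : ℕ) : ℤ) - ((t + 1 : ℕ) : ℤ) = m i - 1 + ((0 : ℕ) : ℤ) - t := by
        intro t; push_cast; ring
      simp only [this]
      simp
      ring
  · obtain ⟨a, ha⟩ : ∃ a, s (Sum.inl i) = a + 1 := ⟨s (Sum.inl i) - 1, by omega⟩
    refine ⟨cc n a (s (Sum.inr i)), ?_, fun h => by omega⟩
    ext m
    have hv2 : (fun j => m j + (s + Finsupp.single (Sum.inr i) 1 : Fin n ⊕ Fin n →₀ ℕ) (Sum.inl j)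
        - ((s + Finsupp.single (Sum.inr i) 1 : Fin n ⊕ Fin n →₀ ℕ) (Sum.inr j) : ℕ)) =
        (fun j => m j + ((s - Finsupp.single (Sum.inl i) 1 : Fin n ⊕ Fin n →₀ ℕ) (Sum.inl j) : ℕ)
        - ((s - Finsupp.single (Sum.inl i) 1 : Fin n ⊕ Fin n →₀ ℕ) (Sum.inr j) : ℕ)) := by
      ext j
      by_cases hj : j = i
      · subst hj; simp [ha]; ring
      · simp [hj, Ne.symm hj, Finsupp.single_apply]
    simp only [Yop, LinearMap.coe_mk, AddHom.coe_mk, uu, Pi.add_apply, Pi.smul_apply, smul_eq_mul]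
    rw [hv, hv2]
    rw [← mul_assoc, ← mul_assoc, ← add_mul]
    by_cases hz : vv n (fun j => m j + ((s - Finsupp.single (Sum.inl i) 1 : Fin n ⊕ Fin n →₀ ℕ) (Sum.inl j) : ℕ)
        - ((s - Finsupp.single (Sum.inl i) 1 : Fin n ⊕ Fin n →₀ ℕ) (Sum.inr j) : ℕ)) = 0
    · simp only [hz, mul_zero]
    congr 1
    obtain ⟨j, hj⟩ := vv_ne n _ hz i
    have hodd : Odd (m i + a - s (Sum.inr i)) := by
      refine ⟨(j : ℕ), ?_⟩
      simp [ha] at hj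
      exact hj
    rw [← cc_spec n a _ _ hodd]
    have e1 : qw n (m i) * ∏ x, ww n (s (Sum.inl x)) (s (Sum.inr x))
        ((m - Pi.single i 1 : Fin n → ℤ) x) = qw n (m i) * pw (m i - 1) *
        ∏ x, ww n ((s - Finsupp.single (Sum.inl i) 1 : Fin n ⊕ Fin n →₀ ℕ) (Sum.inl x))
          ((s - Finsupp.single (Sum.inl i) 1 : Fin n ⊕ Fin n →₀ ℕ) (Sum.inr x)) (m x) := by
      apply prod_upd i
      · intro j hj
        simp [hj, Ne.symm hj, Finsupp.single_apply]
      · simp [ha]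
        rw [← ww_x]; ring_nf
    have e2 : 1 * ∏ x, ww n ((s + Finsupp.single (Sum.inr i) 1 : Fin n ⊕ Fin n →₀ ℕ) (Sum.inl x))
          ((s + Finsupp.single (Sum.inr i) 1 : Fin n ⊕ Fin n →₀ ℕ) (Sum.inr x)) (m x) =
        pw (m i + a) * qw n (m i + a + 1) *
        ∏ x, ww n ((s - Finsupp.single (Sum.inl i) 1 : Fin n ⊕ Fin n →₀ ℕ) (Sum.inl x))
          ((s - Finsupp.single (Sum.inl i) 1 : Fin n ⊕ Fin n →₀ ℕ) (Sum.inr x)) (m x) := by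
      apply prod_upd i
      · intro j hj
        simp [hj, Ne.symm hj, Finsupp.single_apply]
      · simp [ha]
        rw [← ww_y']
    rw [one_mul] at e2
    rw [e1, e2]; ring


noncomputable def Phi (n : ℕ) :
    MvPolynomial (Fin n ⊕ Fin n) ℂ →ₗ[ℂ] ((Fin n → ℤ) → ℂ) :=
  (basisMonomials (Fin n ⊕ Fin n) ℂ).constr ℂ (uu n)

lemma Phi_monomial (n : ℕ) (s : Fin n ⊕ Fin n →₀ ℕ) (c : ℂ) :
    Phi n (monomial s c) = c • uu n s := by
  have h : (monomial s c : MvPolynomial (Fin n ⊕ Fin n) ℂ) = c • basisMonomials _ ℂ s := by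
    rw [coe_basisMonomials, smul_monomial]; simp
  rw [h, map_smul, Phi, Module.Basis.constr_basis]

lemma Phi_apply (n : ℕ) (f : MvPolynomial (Fin n ⊕ Fin n) ℂ) :
    Phi n f = ∑ s ∈ f.support, coeff s f • uu n s := by
  conv_lhs => rw [f.as_sum]
  rw [map_sum]
  exact sum_congr rfl fun s _ => Phi_monomial n s _

def GG (n d : ℕ) : Submodule ℂ ((Fin n → ℤ) → ℂ) :=
  Submodule.span ℂ {g | ∃ s : Fin n ⊕ Fin n →₀ ℕ, s.degree < d ∧ uu n s = g}

lemma uu_mem (n d : ℕ) (s : Fin n ⊕ Fin n →₀ ℕ) (h : s.degree < d) : uu n s ∈ GG n d :=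
  Submodule.subset_span ⟨s, h, rfl⟩

lemma GG_mono (n : ℕ) {d e : ℕ} (h : d ≤ e) : GG n d ≤ GG n e := by
  apply Submodule.span_mono
  rintro g ⟨s, hs, rfl⟩
  exact ⟨s, by omega, rfl⟩

lemma Xop_GG (n d : ℕ) (i : Fin n) (g : (Fin n → ℤ) → ℂ) (h : g ∈ GG n d) :
    Xop n i g ∈ GG n (d + 1) := by
  induction h using Submodule.span_induction with
  | mem g hg =>
    obtain ⟨s, hs, rfl⟩ := hg
    rw [Xop_uu]
    exact uu_mem _ _ _ (by simp; omega)
  | zero => simp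
  | add a b _ _ ha hb => rw [map_add]; exact add_mem ha hb
  | smul c a _ ha => rw [map_smul]; exact Submodule.smul_mem _ _ ha

lemma degree_sub_le (n : ℕ) (s t : Fin n ⊕ Fin n →₀ ℕ) : (s - t).degree ≤ s.degree :=
  Finsupp.degree_mono (by intro i; simp)

lemma Yop_GG (n d : ℕ) (i : Fin n) (g : (Fin n → ℤ) → ℂ) (h : g ∈ GG n d) :
    Yop n i g ∈ GG n (d + 1) := by
  induction h using Submodule.span_induction with
  | mem g hg =>
    obtain ⟨s, hs, rfl⟩ := hg
    obtain ⟨c, hc, -⟩ := Yop_uu n i s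
    rw [hc]
    refine add_mem (uu_mem _ _ _ (by simp; omega)) (Submodule.smul_mem _ _ (uu_mem _ _ _ ?_))
    have := degree_sub_le n s (Finsupp.single (Sum.inl i) 1)
    omega
  | zero => simp
  | add a b _ _ ha hb => rw [map_add]; exact add_mem ha hb
  | smul c a _ ha => rw [map_smul]; exact Submodule.smul_mem _ _ ha

lemma Phi_X (n : ℕ) (i : Fin n) (f : MvPolynomial (Fin n ⊕ Fin n) ℂ) :
    Phi n (X (Sum.inl i) * f) = Xop n i (Phi n f) := by
  induction f using MvPolynomial.induction_on' with
  | monomial s c =>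
    rw [Phi_monomial, map_smul, Xop_uu, X, monomial_mul, Phi_monomial, add_comm, one_mul]
  | add p q hp hq => rw [mul_add, map_add, map_add, map_add, hp, hq]

lemma Phi_Y (n d : ℕ) (i : Fin n) (f : MvPolynomial (Fin n ⊕ Fin n) ℂ) (hf : f.IsHomogeneous d) :
    Phi n (X (Sum.inr i) * f) - Yop n i (Phi n f) ∈ GG n (d + 1) := by
  conv in (occs := *) f => all_goals rw [f.as_sum]
  rw [mul_sum, map_sum, map_sum, map_sum, ← sum_sub_distrib]
  refine sum_mem fun s hs => ?_
  have hd : s.degree = d := by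
    by_contra hne
    exact (mem_support_iff.mp hs) (hf.coeff_eq_zero hne)
  obtain ⟨c, hc, -⟩ := Yop_uu n i s
  rw [Phi_monomial, map_smul, hc, X, monomial_mul, Phi_monomial,
    add_comm (Finsupp.single _ _) s, one_mul, smul_add, sub_add_cancel_left]
  refine neg_mem (Submodule.smul_mem _ _ (Submodule.smul_mem _ _ (uu_mem _ _ _ ?_)))
  have := degree_sub_le n s (Finsupp.single (Sum.inl i) 1)
  omega

lemma hc_X {n : ℕ} (d : ℕ) (i : Fin n ⊕ Fin n) (f : MvPolynomial (Fin n ⊕ Fin n) ℂ) :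
    homogeneousComponent (d + 1) (X i * f) = X i * homogeneousComponent d f := by
  classical
  ext s
  rw [coeff_homogeneousComponent, coeff_X_mul', coeff_X_mul', coeff_homogeneousComponent]
  by_cases hs : i ∈ s.support
  · have h1 : s = (s - Finsupp.single i 1) + Finsupp.single i 1 := by
      rw [tsub_add_cancel_of_le]
      rw [Finsupp.single_le_iff]
      have := Finsupp.mem_support_iff.mp hs
      omega
    have h2 : s.degree = (s - Finsupp.single i 1).degree + 1 := by
      conv_lhs => rw [h1]
      simp
    simp only [hs, if_true, h2, add_left_inj]
  · simp [hs]

lemma hc_X0 {n : ℕ} (i : Fin n ⊕ Fin n) (f : MvPolynomial (Fin n ⊕ Fin n) ℂ) :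
    homogeneousComponent 0 (X i * f) = 0 := by
  rw [homogeneousComponent_zero, ← constantCoeff_eq]; simp

/-- The initial ideal. -/
noncomputable def JJ (n : ℕ) : Ideal (MvPolynomial (Fin n ⊕ Fin n) ℂ) where
  carrier := {f | ∀ d, Phi n (homogeneousComponent d f) ∈ GG n d}
  zero_mem' := by intro d; simp
  add_mem' := by
    intro a b ha hb d
    rw [map_add, map_add]; exact add_mem (ha d) (hb d)
  smul_mem' := by
    intro c f hf
    rw [smul_eq_mul]
    induction c using MvPolynomial.induction_on generalizing f with
    | C a =>
      intro d
      rw [homogeneousComponent_C_mul, ← smul_eq_C_mul, map_smul]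
      exact Submodule.smul_mem _ _ (hf d)
    | add p q hp hq =>
      intro d
      rw [add_mul, map_add, map_add]
      exact add_mem (hp hf d) (hq hf d)
    | mul_X p i hp =>
      rw [mul_assoc]
      apply hp
      intro d
      cases d with
      | zero => rw [hc_X0]; simp
      | succ d =>
        rw [hc_X]
        rcases i with i | i
        · rw [Phi_X]; exact Xop_GG _ _ _ _ (hf d)
        · rw [← sub_add_cancel (Phi n _) (Yop n i (Phi n (homogeneousComponent d f)))]
          exact add_mem (Phi_Y _ _ _ _ (homogeneousComponent_isHomogeneous _ _))
            (Yop_GG _ _ _ _ (hf d))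

lemma mem_JJ (n : ℕ) (f : MvPolynomial (Fin n ⊕ Fin n) ℂ) :
    f ∈ JJ n ↔ ∀ d, Phi n (homogeneousComponent d f) ∈ GG n d := Iff.rfl

lemma range_le (n : ℕ) [Module.Finite ℂ (MvPolynomial (Fin n ⊕ Fin n) ℂ ⧸ JJ n)] :
    ∃ w : Fin (Module.finrank ℂ (MvPolynomial (Fin n ⊕ Fin n) ℂ ⧸ JJ n)) → ((Fin n → ℤ) → ℂ),
      LinearMap.range (Phi n) ≤ Submodule.span ℂ (Set.range w) := by
  classical
  let mk := (Ideal.Quotient.mkₐ ℂ (JJ n)).toLinearMap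
  let S : Set (MvPolynomial (Fin n ⊕ Fin n) ℂ ⧸ JJ n) :=
    Set.range fun s => mk (monomial s 1)
  have hS : Submodule.span ℂ S = ⊤ := by
    have : S = mk '' (Set.range (basisMonomials (Fin n ⊕ Fin n) ℂ)) := by
      rw [← Set.range_comp]; simp [S, Function.comp_def]
    rw [this, Submodule.span_image, Module.Basis.span_eq, Submodule.map_top,
      LinearMap.range_eq_top]
    exact Ideal.Quotient.mkₐ_surjective ℂ (JJ n)
  obtain ⟨f, hf, hspan, -⟩ := Submodule.exists_fun_fin_finrank_span_eq ℂ S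
  choose b hb using hf
  replace hspan := hspan.trans hS
  have hfr : Module.finrank ℂ (Submodule.span ℂ S) =
    Module.finrank ℂ (MvPolynomial (Fin n ⊕ Fin n) ℂ ⧸ JJ n) := by rw [hS]; exact finrank_top _ _
  let e := finCongr hfr
  refine ⟨fun i => uu n (b (e.symm i)), ?_⟩
  have hr : Set.range (fun i => uu n (b (e.symm i))) = Set.range fun i => uu n (b i) := by
    ext g
    constructor
    · rintro ⟨i, rfl⟩; exact ⟨_, rfl⟩
    · rintro ⟨i, rfl⟩; exact ⟨e i, by simp⟩
  rw [hr]
  set B := Submodule.span ℂ (Set.range fun i => uu n (b i))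
  have key : ∀ d : ℕ, ∀ s : Fin n ⊕ Fin n →₀ ℕ, s.degree = d → uu n s ∈ B := by
    intro d
    induction d using Nat.strong_induction_on with
    | _ d ih =>
      intro s hs
      have hG : GG n d ≤ B := by
        rw [GG, Submodule.span_le]
        rintro g ⟨t, ht, rfl⟩
        exact ih _ ht t rfl
      have h1 : mk (monomial s 1) ∈ Submodule.span ℂ (Set.range f) := by
        rw [hspan]; trivial
      rw [Submodule.mem_span_range_iff_exists_fun] at h1
      obtain ⟨c, hc⟩ := h1
      have h2 : (monomial s 1 - ∑ i, c i • monomial (b i) 1 :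
          MvPolynomial (Fin n ⊕ Fin n) ℂ) ∈ JJ n := by
        rw [← Ideal.Quotient.eq_zero_iff_mem]
        change mk _ = 0
        rw [map_sub, map_sum, ← hc, sub_eq_zero]
        exact sum_congr rfl fun i _ => by rw [map_smul]; congr 1; exact (hb i).symm
      have h3 := (mem_JJ _ _).mp h2 d
      rw [map_sub, map_sub, map_sum, map_sum] at h3
      rw [homogeneousComponent_of_mem (isHomogeneous_monomial 1 hs), if_pos rfl,
        Phi_monomial, one_smul] at h3
      have h4 := add_mem (hG h3) (show (∑ i, Phi n (homogeneousComponent d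
        (c i • monomial (b i) (1 : ℂ)))) ∈ B from ?_)
      · rwa [sub_add_cancel] at h4
      · refine sum_mem fun i _ => ?_
        rw [map_smul, map_smul]
        apply Submodule.smul_mem
        rw [homogeneousComponent_of_mem (isHomogeneous_monomial 1 rfl)]
        split_ifs
        · rw [Phi_monomial, one_smul]
          exact Submodule.subset_span ⟨i, rfl⟩
        · simp
  rintro g ⟨p, rfl⟩
  rw [Phi_apply]
  exact sum_mem fun s _ => Submodule.smul_mem _ _ (key _ s rfl)

lemma ww_box (n a b : ℕ) (k : ℤ) (h : ww n a b k ≠ 0) (h0 : 0 ≤ k + a - b)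
    (h1 : k + a - b ≤ 2 * n) : 0 ≤ k ∧ k ≤ 2 * n := by
  unfold ww at h
  rw [mul_ne_zero_iff, prod_ne_zero_iff, prod_ne_zero_iff] at h
  obtain ⟨hp, hq⟩ := h
  constructor
  · by_contra hk
    push Not at hk
    have := hp (-1 - k).toNat (by simp; omega)
    apply this
    have e : k + ((-1 - k).toNat : ℤ) = -1 := by omega
    rw [e]; simp [pw]
  · by_contra hk
    push Not at hk
    have := hq (k + a - (2 * n + 1)).toNat (by simp; omega)
    apply this
    have e : k + a - ((k + a - (2 * n + 1)).toNat : ℤ) = 2 * n + 1 := by omega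
    rw [e]
    simp [qw]

lemma Phi_ne (n : ℕ) (f : MvPolynomial (Fin n ⊕ Fin n) ℂ) (m : Fin n → ℤ) (h : Phi n f m ≠ 0) :
    ∃ s ∈ f.support, uu n s m ≠ 0 := by
  rw [Phi_apply] at h
  simp only [Finset.sum_apply, Pi.smul_apply] at h
  obtain ⟨s, hs, h⟩ := exists_ne_zero_of_sum_ne_zero h
  exact ⟨s, hs, fun h0 => h (by rw [h0, smul_zero])⟩

lemma uu_ne (n : ℕ) (s : Fin n ⊕ Fin n →₀ ℕ) (m : Fin n → ℤ) (h : uu n s m ≠ 0) (i : Fin n) :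
    0 ≤ m i ∧ m i ≤ 2 * n ∧ Odd (m i + s (Sum.inl i) - s (Sum.inr i)) := by
  rw [uu, mul_ne_zero_iff, prod_ne_zero_iff] at h
  obtain ⟨h1, h2⟩ := h
  obtain ⟨j, hj⟩ := vv_ne n _ h2 i
  have hjn := j.2
  have := ww_box n _ _ _ (h1 i (mem_univ i)) (by omega) (by omega)
  exact ⟨this.1, this.2, (j : ℕ), hj⟩

lemma uu_perm (n : ℕ) (σ : Equiv.Perm (Fin n)) (s : Fin n ⊕ Fin n →₀ ℕ) (m : Fin n → ℤ) :
    uu n (s.mapDomain (Sum.map σ σ)) m =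
      ((Equiv.Perm.sign σ : ℤ) : ℂ) * uu n s (fun i => m (σ i)) := by
  have hl : ∀ i, s.mapDomain (Sum.map σ σ) (Sum.inl (σ i)) = s (Sum.inl i) := fun i =>
    Finsupp.mapDomain_apply (f := Sum.map σ σ) (σ.injective.sumMap σ.injective) s (Sum.inl i)
  have hr : ∀ i, s.mapDomain (Sum.map σ σ) (Sum.inr (σ i)) = s (Sum.inr i) := fun i =>
    Finsupp.mapDomain_apply (f := Sum.map σ σ) (σ.injective.sumMap σ.injective) s (Sum.inr i)
  unfold uu
  rw [← Equiv.prod_comp σ]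
  simp only [hl, hr]
  have := vv_perm n (fun i => m i + s.mapDomain (Sum.map σ σ) (Sum.inl i) -
    (s.mapDomain (Sum.map σ σ) (Sum.inr i) : ℕ)) σ
  simp only [hl, hr] at this
  rw [this]
  have hs : ((Equiv.Perm.sign σ : ℤ) : ℂ) * ((Equiv.Perm.sign σ : ℤ) : ℂ) = 1 := by
    rcases Int.units_eq_one_or (Equiv.Perm.sign σ) with h | h <;> simp [h]
  linear_combination (-(∏ i, ww n (s (Sum.inl i)) (s (Sum.inr i)) (m (σ i))) * vv n (fun i => m i + s.mapDomain (Sum.map σ σ) (Sum.inl i) -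
    (s.mapDomain (Sum.map σ σ) (Sum.inr i) : ℕ))) * hs

lemma Phi_perm (n : ℕ) (σ : Equiv.Perm (Fin n)) (f : MvPolynomial (Fin n ⊕ Fin n) ℂ)
    (m : Fin n → ℤ) : Phi n (rename (Sum.map σ σ) f) m =
      ((Equiv.Perm.sign σ : ℤ) : ℂ) * Phi n f (fun i => m (σ i)) := by
  induction f using MvPolynomial.induction_on' with
  | monomial s c =>
    rw [rename_monomial, Phi_monomial, Phi_monomial, Pi.smul_apply, Pi.smul_apply, uu_perm,
      smul_eq_mul, smul_eq_mul]
    ring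
  | add p q hp hq => simp only [map_add, Pi.add_apply, hp, hq, mul_add]


lemma alt_inj (n : ℕ) (g : (Fin n → ℤ) → ℂ)
    (hg : ∀ (σ : Equiv.Perm (Fin n)) m, g m = ((Equiv.Perm.sign σ : ℤ) : ℂ) * g (fun i => m (σ i)))
    (m : Fin n → ℤ) (h : g m ≠ 0) : Function.Injective m := by
  intro i j hij
  by_contra hne
  have h1 := hg (Equiv.swap i j) m
  have h2 : (fun k => m (Equiv.swap i j k)) = m := by
    ext k
    rw [Equiv.swap_apply_def]
    split_ifs with h3 h4
    · rw [h3, hij]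
    · rw [h4, hij]
    · rfl
  rw [h2, Equiv.Perm.sign_swap hne] at h1
  apply h
  push_cast at h1
  linear_combination h1 / 2

lemma alt_odd (n : ℕ) (g : (Fin n → ℤ) → ℂ)
    (hg : ∀ (σ : Equiv.Perm (Fin n)) m, g m = ((Equiv.Perm.sign σ : ℤ) : ℂ) * g (fun i => m (σ i)))
    (hs : ∀ m, g m ≠ 0 → ∀ i, ∃ j : Fin n, m i = 2 * (j : ℕ) + 1)
    (h0 : g (fun i => 2 * (i : ℕ) + 1) = 0) : g = 0 := by
  ext m
  by_contra hm
  have hinj := alt_inj n g hg m hm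
  choose τ hτ using hs m hm
  have hτi : Function.Injective τ := by
    intro i j hij
    apply hinj
    rw [hτ, hτ, hij]
  have h1 := hg (Equiv.ofBijective τ (Finite.injective_iff_bijective.mp hτi))
    (fun i => 2 * (i : ℕ) + 1)
  rw [h0] at h1
  have h2 : (fun i => 2 * (((Equiv.ofBijective τ (Finite.injective_iff_bijective.mp hτi)) i : ℕ) : ℤ)
    + 1) = m := by
    ext i; rw [hτ i]; rfl
  rw [h2] at h1
  rcases Int.units_eq_one_or (Equiv.Perm.sign (Equiv.ofBijective τ
    (Finite.injective_iff_bijective.mp hτi))) with h | h <;> rw [h] at h1 <;>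
    · apply hm; simpa using h1.symm

def ee (n : ℕ) (j : Fin (n + 1)) : Fin n → ℤ := fun i => 2 * ((j.succAbove i : ℕ) : ℤ)

lemma alt_even (n : ℕ) (g : (Fin n → ℤ) → ℂ)
    (hg : ∀ (σ : Equiv.Perm (Fin n)) m, g m = ((Equiv.Perm.sign σ : ℤ) : ℂ) * g (fun i => m (σ i)))
    (hs : ∀ m, g m ≠ 0 → ∀ i, ∃ j : Fin (n + 1), m i = 2 * (j : ℕ))
    (h0 : ∀ j, g (ee n j) = 0) : g = 0 := by
  ext m
  by_contra hm
  have hinj := alt_inj n g hg m hm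
  choose τ hτ using hs m hm
  have hτi : Function.Injective τ := by
    intro i j hij
    apply hinj
    rw [hτ, hτ, hij]
  have hns : ¬ Function.Surjective τ := by
    intro hsur
    have := Fintype.card_le_of_surjective τ hsur
    simp at this
  rw [Function.Surjective] at hns
  push Not at hns
  obtain ⟨j, hj⟩ := hns
  choose ρ hρ using fun i => Fin.exists_succAbove_eq (hj i)
  have hρi : Function.Injective ρ := by
    intro a b hab
    apply hτi
    rw [← hρ, ← hρ, hab]
  have h1 := hg (Equiv.ofBijective ρ (Finite.injective_iff_bijective.mp hρi)) (ee n j)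
  rw [h0] at h1
  have h2 : (fun i => ee n j ((Equiv.ofBijective ρ (Finite.injective_iff_bijective.mp hρi)) i))
     = m := by
    ext i; rw [hτ i, ← hρ i]; rfl
  rw [h2] at h1
  rcases Int.units_eq_one_or (Equiv.Perm.sign (Equiv.ofBijective ρ
    (Finite.injective_iff_bijective.mp hρi))) with h | h <;> rw [h] at h1 <;>
    · apply hm; simpa using h1.symm

lemma bAct_perm (n : ℕ) (σ : Equiv.Perm (Fin n)) :
    bAct n 1 σ = rename (Sum.map σ σ) := by
  apply MvPolynomial.algHom_ext
  rintro (i | i) <;> simp [bAct]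

lemma bAct_sign_monomial (n : ℕ) (ε : Fin n → ℤˣ) (s : Fin n ⊕ Fin n →₀ ℕ) (c : ℂ) :
    bAct n ε 1 (monomial s c) =
      monomial s ((∏ i, ((ε i : ℤ) : ℂ) ^ (s (Sum.inl i) + s (Sum.inr i))) * c) := by
  rw [bAct, aeval_monomial, monomial_eq, Finsupp.prod_fintype _ _ (by simp),
    Finsupp.prod_fintype _ _ (by simp), Fintype.prod_sum_type, Fintype.prod_sum_type]
  simp only [Sum.elim_inl, Sum.elim_inr, Equiv.Perm.coe_one, id, smul_eq_C_mul, mul_pow,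
    prod_mul_distrib, algebraMap_eq, map_mul, map_prod, map_pow, pow_add]
  ring

lemma coeff_bAct_sign (n : ℕ) (ε : Fin n → ℤˣ) (s : Fin n ⊕ Fin n →₀ ℕ)
    (f : MvPolynomial (Fin n ⊕ Fin n) ℂ) : coeff s (bAct n ε 1 f) =
      (∏ i, ((ε i : ℤ) : ℂ) ^ (s (Sum.inl i) + s (Sum.inr i))) * coeff s f := by
  classical
  induction f using MvPolynomial.induction_on' with
  | monomial t c =>
    rw [bAct_sign_monomial, coeff_monomial, coeff_monomial]
    split_ifs with h
    · rw [h]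
    · simp
  | add p q hp hq => rw [map_add, coeff_add, coeff_add, hp, hq, mul_add]

lemma inv_even (n : ℕ) (p : MvPolynomial (Fin n ⊕ Fin n) ℂ) (hp : ∀ ε σ, bAct n ε σ p = p)
    (s : Fin n ⊕ Fin n →₀ ℕ) (hs : coeff s p ≠ 0) (i : Fin n) :
    Even (s (Sum.inl i) + s (Sum.inr i)) := by
  classical
  have h := coeff_bAct_sign n (Function.update 1 i (-1)) s p
  rw [hp] at h
  have h2 : (∏ j, (((Function.update 1 i (-1) : Fin n → ℤˣ) j : ℤ) : ℂ) ^
      (s (Sum.inl j) + s (Sum.inr j))) = (-1) ^ (s (Sum.inl i) + s (Sum.inr i)) := by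
    rw [Fintype.prod_eq_single i]
    · simp
    · intro j hj; simp [hj]
  rw [h2] at h
  by_contra hodd
  rw [Nat.not_even_iff_odd] at hodd
  rw [hodd.neg_one_pow] at h
  apply hs
  linear_combination h / 2

lemma inv_perm (n : ℕ) (p : MvPolynomial (Fin n ⊕ Fin n) ℂ) (hp : ∀ ε σ, bAct n ε σ p = p)
    (σ : Equiv.Perm (Fin n)) : rename (Sum.map σ σ) p = p := by
  rw [← bAct_perm, hp]

lemma uu_zero (n : ℕ) : uu n 0 = vv n := by
  ext m; simp [uu, ww]

lemma Phi_alt (n : ℕ) (p : MvPolynomial (Fin n ⊕ Fin n) ℂ)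
    (hp : ∀ σ : Equiv.Perm (Fin n), rename (Sum.map σ σ) p = p) (σ : Equiv.Perm (Fin n))
    (m : Fin n → ℤ) : Phi n p m = ((Equiv.Perm.sign σ : ℤ) : ℂ) * Phi n p (fun i => m (σ i)) := by
  rw [← Phi_perm, hp]

lemma inv_mem_JJ (n : ℕ) (p : MvPolynomial (Fin n ⊕ Fin n) ℂ) (hp : ∀ ε σ, bAct n ε σ p = p)
    (h0 : constantCoeff p = 0) : p ∈ JJ n := by
  rw [mem_JJ]
  intro d
  rcases Nat.eq_zero_or_pos d with rfl | hd
  · rw [homogeneousComponent_zero, ← constantCoeff_eq, h0]; simp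
  set q := homogeneousComponent d p with hq
  have hqp : ∀ σ : Equiv.Perm (Fin n), rename (Sum.map σ σ) q = q := by
    intro σ
    rw [hq, rename_homogeneousComponent, inv_perm n p hp]
  have key : Phi n q - Phi n q (fun i => 2 * (i : ℕ) + 1) • vv n = 0 := by
    apply alt_odd
    · intro σ m
      have h1 := Phi_alt n q hqp σ m
      have h2 : vv n m = ((Equiv.Perm.sign σ : ℤ) : ℂ) * vv n (fun i => m (σ i)) := by
        rw [vv_perm, ← mul_assoc]
        rcases Int.units_eq_one_or (Equiv.Perm.sign σ) with h | h <;> simp [h]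
      simp only [Pi.sub_apply, Pi.smul_apply, smul_eq_mul]
      rw [h1, h2]
      ring
    · intro m hm i
      by_cases hv : vv n m = 0
      · have : Phi n q m ≠ 0 := by
          intro h; apply hm; simp [h, hv]
        obtain ⟨s, hs, hne⟩ := Phi_ne n q m this
        obtain ⟨b0, b1, k, hk⟩ := uu_ne n s m hne i
        have hsp : coeff s p ≠ 0 := by
          rw [mem_support_iff, hq, coeff_homogeneousComponent] at hs
          intro h; apply hs; simp [h]
        obtain ⟨l, hl⟩ := inv_even n p hp s hsp i
        refine ⟨⟨((m i - 1) / 2).toNat, ?_⟩, ?_⟩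
        · omega
        · simp only; omega
      · exact vv_ne n m hv i
    · simp [vv_std]
  rw [sub_eq_zero] at key
  rw [key]
  apply Submodule.smul_mem
  rw [← uu_zero]
  exact uu_mem _ _ _ (by simpa using hd)

lemma uu_range (n : ℕ) (s : Fin n ⊕ Fin n →₀ ℕ) : uu n s ∈ LinearMap.range (Phi n) :=
  ⟨monomial s 1, by rw [Phi_monomial, one_smul]⟩

lemma Xop_range (n : ℕ) (i : Fin n) (g : (Fin n → ℤ) → ℂ) (h : g ∈ LinearMap.range (Phi n)) :
    Xop n i g ∈ LinearMap.range (Phi n) := by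
  obtain ⟨f, rfl⟩ := h
  exact ⟨X (Sum.inl i) * f, Phi_X n i f⟩

lemma Yop_range (n : ℕ) (i : Fin n) (g : (Fin n → ℤ) → ℂ) (h : g ∈ LinearMap.range (Phi n)) :
    Yop n i g ∈ LinearMap.range (Phi n) := by
  obtain ⟨f, rfl⟩ := h
  rw [Phi_apply, map_sum]
  refine sum_mem fun s _ => ?_
  obtain ⟨c, hc, -⟩ := Yop_uu n i s
  rw [map_smul, hc]
  exact Submodule.smul_mem _ _ (add_mem (uu_range _ _) (Submodule.smul_mem _ _ (uu_range _ _)))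

noncomputable def bb (n : ℕ) (k : ℤ) : ℂ := pw k * qw n (k + 1)

lemma bb_inj (n : ℕ) (k l : ℤ) (hk : 0 ≤ k ∧ k ≤ 2 * n) (hl : 0 ≤ l ∧ l ≤ 2 * n)
    (h : bb n k = bb n l) : k = l := by
  unfold bb at h
  rw [pq, pq] at h
  split_ifs at h with h1 h2 h2
  · have : k - 2 * n = l - 2 * n := by exact_mod_cast h
    omega
  · have : k - 2 * n = l + 1 := by exact_mod_cast h
    omega
  · have : k + 1 = l - 2 * n := by exact_mod_cast h
    omega
  · have : k + 1 = l + 1 := by exact_mod_cast h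
    omega

lemma bb_mul (n : ℕ) (i : Fin n) (c : ℂ) (g : (Fin n → ℤ) → ℂ)
    (h : g ∈ LinearMap.range (Phi n)) :
    (fun m : Fin n → ℤ => (bb n (m i) - c)) * g ∈ LinearMap.range (Phi n) := by
  have h1 := sub_mem (Xop_range n i _ (Yop_range n i g h)) (Submodule.smul_mem _ c h)
  convert h1 using 1
  ext m
  simp [Xop, Yop, bb]
  ring

lemma delta0 (n : ℕ) : (Pi.single (fun i : Fin n => 2 * ((i : ℕ) : ℤ) + 1) (1 : ℂ) :
    (Fin n → ℤ) → ℂ) ∈ LinearMap.range (Phi n) := by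
  classical
  set m0 : Fin n → ℤ := fun i : Fin n => 2 * ((i : ℕ) : ℤ) + 1 with hm0
  have hprod : ∀ (i : Fin n) (T : Finset ℤ) (g : (Fin n → ℤ) → ℂ), g ∈ LinearMap.range (Phi n) →
      (fun m : Fin n → ℤ => ∏ k ∈ T, (bb n (m i) - bb n k)) * g ∈ LinearMap.range (Phi n) := by
    intro i T
    induction T using Finset.induction_on with
    | empty => intro g hg; convert hg using 1; ext m; simp
    | insert k T hk ih =>
      intro g hg
      convert bb_mul n i (bb n k) _ (ih g hg) using 1
      ext m
      simp [prod_insert hk, mul_assoc]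
  have hprod2 : ∀ (A : Finset (Fin n)),
      (fun m : Fin n → ℤ => ∏ i ∈ A, ∏ k ∈ (Finset.Icc 0 (2 * (n : ℤ))).erase (m0 i),
        (bb n (m i) - bb n k)) * uu n 0 ∈ LinearMap.range (Phi n) := by
    intro A
    induction A using Finset.induction_on with
    | empty => convert uu_range n 0 using 1; ext m; simp
    | insert i A hi ih =>
      convert hprod i ((Finset.Icc 0 (2 * (n : ℤ))).erase (m0 i)) _ ih using 1
      ext m
      simp [prod_insert hi, mul_assoc]
  have h := hprod2 univ
  set φ := (fun m : Fin n → ℤ => ∏ i, ∏ k ∈ (Finset.Icc 0 (2 * (n : ℤ))).erase (m0 i),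
        (bb n (m i) - bb n k))
  have hφ : φ m0 ≠ 0 := by
    rw [prod_ne_zero_iff]
    intro i _
    rw [prod_ne_zero_iff]
    intro k hk
    rw [mem_erase, Finset.mem_Icc] at hk
    rw [sub_ne_zero]
    intro he
    apply hk.1
    refine (bb_inj n _ _ ?_ hk.2 he).symm
    have := i.2
    simp only [hm0]
    omega
  have h2 : φ * uu n 0 = φ m0 • (Pi.single m0 (1 : ℂ) : (Fin n → ℤ) → ℂ) := by
    ext m
    by_cases hm : m = m0
    · subst hm
      simp only [Pi.mul_apply, uu_zero, Pi.smul_apply, Pi.single_eq_same, smul_eq_mul]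
      rw [hm0, vv_std]
    · simp [hm]
      by_contra hc
      push Not at hc
      apply hm
      ext i
      by_contra hne
      apply hc.1
      apply prod_eq_zero (mem_univ i)
      have hb := uu_ne n 0 m hc.2 i
      apply prod_eq_zero (i := m i)
      · rw [mem_erase, Finset.mem_Icc]
        exact ⟨hne, hb.1, hb.2.1⟩
      · simp
  rw [h2] at h
  exact (Submodule.smul_mem_iff _ hφ).mp h

lemma pw_ne (k : ℤ) (h : k ≠ -1) : pw k ≠ 0 := by
  unfold pw
  split_ifs
  · simp
  · intro h2
    have : k + 1 = 0 := by exact_mod_cast h2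
    omega

lemma qw_ne (n : ℕ) (k : ℤ) (h : k ≠ 2 * n + 1) : qw n k ≠ 0 := by
  unfold qw
  split_ifs
  · simp
  · intro h2
    have : k - (2 * n + 1) = 0 := by exact_mod_cast h2
    omega

lemma delta_down (n : ℕ) (i : Fin n) (m : Fin n → ℤ) (h : m i ≠ 0)
    (hm : (Pi.single m (1 : ℂ) : (Fin n → ℤ) → ℂ) ∈ LinearMap.range (Phi n)) :
    (Pi.single (m - Pi.single i 1) (1 : ℂ) : (Fin n → ℤ) → ℂ) ∈ LinearMap.range (Phi n) := by
  classical
  have h1 := Xop_range n i _ hm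
  have h2 : Xop n i (Pi.single m (1 : ℂ)) =
      pw (m i - 1) • (Pi.single (m - Pi.single i 1) (1 : ℂ) : (Fin n → ℤ) → ℂ) := by
    ext m'
    simp only [Xop, LinearMap.coe_mk, AddHom.coe_mk, Pi.smul_apply, Pi.single_apply, smul_eq_mul,
      ← eq_sub_iff_add_eq]
    split_ifs with h3
    · rw [h3]; simp
    · simp
  rw [h2] at h1
  exact (Submodule.smul_mem_iff _ (pw_ne _ (by omega))).mp h1

lemma delta_up (n : ℕ) (i : Fin n) (m : Fin n → ℤ) (h : m i ≠ 2 * n)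
    (hm : (Pi.single m (1 : ℂ) : (Fin n → ℤ) → ℂ) ∈ LinearMap.range (Phi n)) :
    (Pi.single (m + Pi.single i 1) (1 : ℂ) : (Fin n → ℤ) → ℂ) ∈ LinearMap.range (Phi n) := by
  classical
  have h1 := Yop_range n i _ hm
  have h2 : Yop n i (Pi.single m (1 : ℂ)) =
      qw n (m i + 1) • (Pi.single (m + Pi.single i 1) (1 : ℂ) : (Fin n → ℤ) → ℂ) := by
    ext m'
    simp only [Yop, LinearMap.coe_mk, AddHom.coe_mk, Pi.smul_apply, Pi.single_apply, smul_eq_mul,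
      sub_eq_iff_eq_add]
    split_ifs with h3
    · rw [h3]; simp
    · simp
  rw [h2] at h1
  exact (Submodule.smul_mem_iff _ (qw_ne _ _ (by omega))).mp h1

lemma delta_upd (n : ℕ) (i : Fin n) (d : ℕ) : ∀ (m : Fin n → ℤ) (k : ℤ), (m i - k).natAbs = d →
    0 ≤ k → k ≤ 2 * n → 0 ≤ m i → m i ≤ 2 * n →
    (Pi.single m (1 : ℂ) : (Fin n → ℤ) → ℂ) ∈ LinearMap.range (Phi n) →
    (Pi.single (Function.update m i k) (1 : ℂ) : (Fin n → ℤ) → ℂ) ∈ LinearMap.range (Phi n) := by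
  induction d with
  | zero =>
    intro m k hd _ _ _ _ hm
    have : k = m i := by omega
    rw [this, Function.update_eq_self]; exact hm
  | succ d ih =>
    intro m k hd h1 h2 h3 h4 hm
    rcases lt_or_ge k (m i) with h | h
    · have hs := ih (m - Pi.single i 1) k (by simp; omega) h1 h2 (by simp; omega) (by simp; omega)
        (delta_down n i m (by omega) hm)
      have e : Function.update (m - Pi.single i 1) i k = Function.update m i k := by
        ext j
        by_cases hj : j = i
        · subst hj; simp
        · simp [hj]
      rwa [e] at hs
    · have hs := ih (m + Pi.single i 1) k (by simp; omega) h1 h2 (by simp; omega) (by simp; omega)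
        (delta_up n i m (by omega) hm)
      have e : Function.update (m + Pi.single i 1) i k = Function.update m i k := by
        ext j
        by_cases hj : j = i
        · subst hj; simp
        · simp [hj]
      rwa [e] at hs

lemma delta_all (n : ℕ) (m : Fin n → ℤ) (hm : ∀ i, 0 ≤ m i ∧ m i ≤ 2 * n) :
    (Pi.single m (1 : ℂ) : (Fin n → ℤ) → ℂ) ∈ LinearMap.range (Phi n) := by
  classical
  have key : ∀ A : Finset (Fin n),
      (Pi.single (A.piecewise m (fun i : Fin n => 2 * ((i : ℕ) : ℤ) + 1)) (1 : ℂ) :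
        (Fin n → ℤ) → ℂ) ∈ LinearMap.range (Phi n) := by
    intro A
    induction A using Finset.induction_on with
    | empty => simpa using delta0 n
    | insert i A hi ih =>
      rw [Finset.piecewise_insert]
      refine delta_upd n i _ _ _ rfl (hm i).1 (hm i).2 ?_ ?_ ih
      · simp only [Finset.piecewise_eq_of_notMem _ _ _ hi]; omega
      · have := i.2
        simp only [Finset.piecewise_eq_of_notMem _ _ _ hi]; omega
  simpa using key univ

lemma card_le (n : ℕ) [Module.Finite ℂ (MvPolynomial (Fin n ⊕ Fin n) ℂ ⧸ JJ n)] :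
    (2 * n + 1) ^ n ≤ Module.finrank ℂ (MvPolynomial (Fin n ⊕ Fin n) ℂ ⧸ JJ n) := by
  classical
  obtain ⟨w, hw⟩ := range_le n
  let κ : (Fin n → Fin (2 * n + 1)) → (Fin n → ℤ) := fun a i => ((a i : ℕ) : ℤ)
  have hκ : Function.Injective κ := by
    intro a b hab
    ext i
    have := congrFun hab i
    simpa [κ] using this
  have hli : LinearIndependent ℂ (fun a => (Pi.single (κ a) (1 : ℂ) : (Fin n → ℤ) → ℂ)) :=
    (Pi.linearIndependent_single_one (Fin n → ℤ) ℂ).comp κ hκ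
  have hmem : Set.range (fun a => (Pi.single (κ a) (1 : ℂ) : (Fin n → ℤ) → ℂ)) ⊆
      Submodule.span ℂ (Set.range w) := by
    rintro _ ⟨a, rfl⟩
    apply hw
    apply delta_all
    intro i
    have := (a i).2
    simp only [κ]
    omega
  have h1 := linearIndependent_le_span' _ hli (Set.range w) hmem
  rw [Cardinal.mk_fintype, Nat.cast_le] at h1
  have h2 := h1.trans (Fintype.card_range_le w)
  simpa using h2


lemma pow_mem_diag (n : ℕ) (c : Fin n → Fin n ⊕ Fin n)
    (hc : ∀ ε σ j, bAct n ε σ (X (c j)) = (((ε j : ℤ) : ℂ)) • X (c (σ j))) (i : Fin n) :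
    (X (c i) ^ (2 * n) : MvPolynomial (Fin n ⊕ Fin n) ℂ) ∈ diagIdeal n := by
  set P : Polynomial (MvPolynomial (Fin n ⊕ Fin n) ℂ) :=
    ∏ j, (Polynomial.X - Polynomial.C (X (c j) ^ 2)) with hP
  have hmon : P.Monic := Polynomial.monic_prod_of_monic _ _ fun j _ => Polynomial.monic_X_sub_C _
  have hdeg : P.natDegree = n := by
    rw [hP, Polynomial.natDegree_prod_of_monic _ _ fun j _ => Polynomial.monic_X_sub_C _]
    simp only [Polynomial.natDegree_X_sub_C]
    simp
  have hinv : ∀ ε σ, P.map (bAct n ε σ : MvPolynomial (Fin n ⊕ Fin n) ℂ →+* _) = P := by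
    intro ε σ
    rw [hP, Polynomial.map_prod]
    conv_rhs => rw [← Equiv.prod_comp σ]
    refine prod_congr rfl fun j _ => ?_
    rw [Polynomial.map_sub, Polynomial.map_X, Polynomial.map_C]
    congr 2
    change bAct n ε σ (X (c j) ^ 2) = _
    rw [map_pow, hc, smul_pow]
    rcases Int.units_eq_one_or (ε j) with h | h <;> simp [h]
  have hcc : P.map (constantCoeff : MvPolynomial (Fin n ⊕ Fin n) ℂ →+* ℂ) = Polynomial.X ^ n := by
    rw [hP, Polynomial.map_prod]
    simp
  have hk : ∀ k < n, P.coeff k ∈ diagIdeal n := by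
    intro k hk
    apply Ideal.subset_span
    constructor
    · intro ε σ
      conv_rhs => rw [← hinv ε σ]
      rw [Polynomial.coeff_map]; rfl
    · rw [← Polynomial.coeff_map, hcc, Polynomial.coeff_X_pow, if_neg (by omega)]
  have heval : P.eval (X (c i) ^ 2) = 0 := by
    rw [hP, Polynomial.eval_prod]
    apply prod_eq_zero (mem_univ i)
    simp
  rw [Polynomial.eval_eq_sum_range, hdeg, sum_range_succ] at heval
  have h1 : P.coeff n = 1 := by
    have := hmon.coeff_natDegree
    rwa [hdeg] at this
  rw [h1, one_mul, ← pow_mul] at heval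
  rw [eq_neg_of_add_eq_zero_right heval]
  exact neg_mem (sum_mem fun k hk' => Ideal.mul_mem_right _ _ (hk k (mem_range.mp hk')))

lemma finite_diag (n : ℕ) (hn : 0 < n) :
    Module.Finite ℂ (MvPolynomial (Fin n ⊕ Fin n) ℂ ⧸ diagIdeal n) := by
  let mk := Ideal.Quotient.mkₐ ℂ (diagIdeal n)
  have hXint : ∀ v : Fin n ⊕ Fin n, IsIntegral ℂ (mk (X v)) := by
    intro v
    have h0 : (X v ^ (2 * n) : MvPolynomial (Fin n ⊕ Fin n) ℂ) ∈ diagIdeal n := by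
      rcases v with i | i
      · exact pow_mem_diag n Sum.inl (by intro ε σ j; simp [bAct]) i
      · exact pow_mem_diag n Sum.inr (by intro ε σ j; simp [bAct]) i
    apply IsIntegral.of_pow (n := 2 * n) (by omega)
    rw [← map_pow]
    have : mk (X v ^ (2 * n)) = 0 := Ideal.Quotient.eq_zero_iff_mem.mpr h0
    rw [this]
    exact isIntegral_zero
  have htop : Algebra.adjoin ℂ (Set.range fun v => mk (X v)) = ⊤ := by
    have h1 : Set.range (fun v => mk (X v)) = mk '' Set.range X := by
      rw [← Set.range_comp]; rfl
    rw [h1, ← AlgHom.map_adjoin, MvPolynomial.adjoin_range_X, Algebra.map_top,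
      AlgHom.range_eq_top]
    exact Ideal.Quotient.mkₐ_surjective ℂ _
  have hfg := fg_adjoin_of_finite (R := ℂ) (Set.finite_range fun v => mk (X v))
    (by rintro _ ⟨v, rfl⟩; exact hXint v)
  rw [htop, Algebra.top_toSubmodule] at hfg
  exact ⟨hfg⟩

/-- A linear functional vanishes on the ideal if it kills monomial multiples of invariants. -/
lemma vanish (n : ℕ) (L : MvPolynomial (Fin n ⊕ Fin n) ℂ →ₗ[ℂ] ℂ)
    (h : ∀ p, (∀ ε σ, bAct n ε σ p = p) → constantCoeff p = 0 → ∀ t, L (monomial t 1 * p) = 0)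
    (f : MvPolynomial (Fin n ⊕ Fin n) ℂ) (hf : f ∈ diagIdeal n) : L f = 0 := by
  suffices H : ∀ a, L (a * f) = 0 by simpa using H 1
  unfold diagIdeal at hf
  induction hf using Submodule.span_induction with
  | mem p hp =>
    intro a
    induction a using MvPolynomial.induction_on' with
    | monomial t c =>
      have : (monomial t c : MvPolynomial (Fin n ⊕ Fin n) ℂ) = c • monomial t 1 := by
        rw [smul_monomial]; simp
      rw [this, smul_mul_assoc, map_smul, h p hp.1 hp.2, smul_zero]
    | add p q hp hq => rw [add_mul, map_add, hp, hq, add_zero]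
  | zero => simp
  | add x y _ _ hx hy => intro a; rw [mul_add, map_add, hx, hy, add_zero]
  | smul b x _ hx => intro a; rw [smul_eq_mul, ← mul_assoc]; exact hx _

lemma coeff_diag (n : ℕ) (s : Fin n ⊕ Fin n →₀ ℕ)
    (hs : ∀ i, s (Sum.inl i) + s (Sum.inr i) = 1)
    (f : MvPolynomial (Fin n ⊕ Fin n) ℂ) (hf : f ∈ diagIdeal n) : coeff s f = 0 := by
  classical
  refine vanish n (lcoeff ℂ s) ?_ f hf
  intro p hp hp0 t
  rw [lcoeff_apply, coeff_monomial_mul']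
  split_ifs with ht
  · rw [one_mul]
    by_contra hne
    have hev := inv_even n p hp _ hne
    have h0 : s - t = 0 := by
      ext v
      rcases v with i | i
      · have h1 := hev i
        have h2 := hs i
        simp only [Finsupp.tsub_apply, Finsupp.coe_zero, Pi.zero_apply] at h1 ⊢
        obtain ⟨k, hk⟩ := h1
        omega
      · have h1 := hev i
        have h2 := hs i
        simp only [Finsupp.tsub_apply, Finsupp.coe_zero, Pi.zero_apply] at h1 ⊢
        obtain ⟨k, hk⟩ := h1
        omega
    rw [h0, ← constantCoeff_eq, hp0] at hne
    exact hne rfl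
  · rfl

noncomputable def tau (n c : ℕ) : ℂ :=
  if c = 0 then 6 else if c = 1 then -2 * (n - 3) else if c = 2 then (n - 2) * (n - 3)
    else -((n - 1) * (n - 2) * (n - 3))

open Classical in
noncomputable def om (n : ℕ) (s : Fin n ⊕ Fin n →₀ ℕ) : ℂ :=
  ∑ i, if (∀ j, s (Sum.inl j) + s (Sum.inr j) = 1 + if j = i then 2 else 0) ∧
    ∑ j, s (Sum.inr j) = 3 then tau n (s (Sum.inr i)) else 0

lemma om_eval (n : ℕ) (s : Fin n ⊕ Fin n →₀ ℕ) (i : Fin n)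
    (h : ∀ j, s (Sum.inl j) + s (Sum.inr j) = 1 + if j = i then 2 else 0) :
    om n s = if ∑ j, s (Sum.inr j) = 3 then tau n (s (Sum.inr i)) else 0 := by
  classical
  unfold om
  rw [Fintype.sum_eq_single i]
  · simp only [h, implies_true, true_and]
  · intro k hk
    rw [if_neg]
    rintro ⟨h1, -⟩
    have h2 := h k
    rw [h1 k] at h2
    simp [hk] at h2

lemma om_ne (n : ℕ) (s : Fin n ⊕ Fin n →₀ ℕ) (h : om n s ≠ 0) :
    ∃ i, ∀ j, s (Sum.inl j) + s (Sum.inr j) = 1 + if j = i then 2 else 0 := by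
  classical
  unfold om at h
  obtain ⟨i, -, hi⟩ := exists_ne_zero_of_sum_ne_zero h
  refine ⟨i, ?_⟩
  by_contra hc
  exact hi (if_neg fun hh => hc hh.1)

noncomputable def lam (n : ℕ) : MvPolynomial (Fin n ⊕ Fin n) ℂ →ₗ[ℂ] ℂ :=
  (basisMonomials (Fin n ⊕ Fin n) ℂ).constr ℂ (om n)

lemma lam_monomial (n : ℕ) (s : Fin n ⊕ Fin n →₀ ℕ) (c : ℂ) :
    lam n (monomial s c) = c * om n s := by
  have h : (monomial s c : MvPolynomial (Fin n ⊕ Fin n) ℂ) = c • basisMonomials _ ℂ s := by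
    rw [coe_basisMonomials, smul_monomial]; simp
  rw [h, map_smul, lam, Module.Basis.constr_basis, smul_eq_mul]

/-- quadratic exponents -/
noncomputable def qq (n : ℕ) (x : Fin n × Fin 3) : Fin n ⊕ Fin n →₀ ℕ :=
  Finsupp.single (Sum.inl x.1) (2 - (x.2 : ℕ)) + Finsupp.single (Sum.inr x.1) (x.2 : ℕ)

lemma qq_l (n : ℕ) (x : Fin n × Fin 3) (j : Fin n) :
    qq n x (Sum.inl j) = if j = x.1 then 2 - (x.2 : ℕ) else 0 := by
  rw [qq, Finsupp.add_apply, Finsupp.single_apply, Finsupp.single_apply,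
    if_neg (show ¬ (Sum.inr x.1 : Fin n ⊕ Fin n) = Sum.inl j by simp), add_zero]
  simp only [Sum.inl.injEq, eq_comm]

lemma qq_r (n : ℕ) (x : Fin n × Fin 3) (j : Fin n) :
    qq n x (Sum.inr j) = if j = x.1 then (x.2 : ℕ) else 0 := by
  simp [qq, Finsupp.single_apply, eq_comm]

lemma qq_inj (n : ℕ) : Function.Injective (qq n) := by
  rintro ⟨i, c⟩ ⟨j, d⟩ h
  have h1 := DFunLike.congr_fun h (Sum.inl i)
  have h2 := DFunLike.congr_fun h (Sum.inr i)
  rw [qq_l, qq_l] at h1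
  rw [qq_r, qq_r] at h2
  have := c.2
  have := d.2
  simp only [if_true] at h1 h2
  split_ifs at h1 h2 with h3
  · simp only [Prod.mk.injEq]
    exact ⟨h3, Fin.ext h2⟩
  · omega

lemma coeff_qq (n : ℕ) (p : MvPolynomial (Fin n ⊕ Fin n) ℂ) (hp : ∀ ε σ, bAct n ε σ p = p)
    (i j : Fin n) (c : Fin 3) : coeff (qq n (i, c)) p = coeff (qq n (j, c)) p := by
  have h := coeff_rename_mapDomain (Sum.map (Equiv.swap i j) (Equiv.swap i j))
    ((Equiv.swap i j).injective.sumMap (Equiv.swap i j).injective) p (qq n (i, c))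
  rw [inv_perm n p hp] at h
  rw [← h]
  congr 1
  simp only [qq, Finsupp.mapDomain_add, Finsupp.mapDomain_single, Sum.map_inl, Sum.map_inr,
    Equiv.swap_apply_left]

lemma tau_rel (n a c : ℕ) (hc : c < 3) (h : a + c = 3) :
    ((n : ℂ) - a) * tau n c + a * tau n (c + 1) = 0 := by
  interval_cases c
  · obtain rfl : a = 3 := by omega
    simp [tau]; ring
  · obtain rfl : a = 2 := by omega
    simp [tau]; ring
  · obtain rfl : a = 1 := by omega
    simp [tau]; ring

lemma om_sum (n : ℕ) (t : Fin n ⊕ Fin n →₀ ℕ) (ht : ∀ i, t (Sum.inl i) + t (Sum.inr i) = 1)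
    (c : Fin 3) : ∑ i, om n (t + qq n (i, c)) = 0 := by
  have hc := c.2
  have h1 : ∀ i, om n (t + qq n (i, c)) =
      if (∑ j, t (Sum.inr j)) + (c : ℕ) = 3 then
        (1 - (t (Sum.inr i) : ℂ)) * tau n c + (t (Sum.inr i) : ℂ) * tau n (c + 1) else 0 := by
    intro i
    rw [om_eval n _ i]
    · have e : ∑ j, (t + qq n (i, c)) (Sum.inr j) = (∑ j, t (Sum.inr j)) + (c : ℕ) := by
        simp [qq_r, sum_add_distrib]
      rw [e]
      congr 1
      rw [Finsupp.add_apply, qq_r]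
      have := ht i
      have h01 : t (Sum.inr i) = 0 ∨ t (Sum.inr i) = 1 := by omega
      rcases h01 with h | h <;> simp [h, add_comm]
    · intro j
      have := ht j
      rw [Finsupp.add_apply, Finsupp.add_apply, qq_l, qq_r]
      by_cases hji : j = i
      · simp only [hji, if_true] at this ⊢
        omega
      · simp only [hji, if_false]
        omega
  simp only [h1]
  split_ifs with h
  · rw [sum_add_distrib, ← sum_mul, ← sum_mul, sum_sub_distrib]
    have := tau_rel n (∑ j, t (Sum.inr j)) c hc h
    push_cast at this
    simpa using this
  · simp

lemma lam_diag (n : ℕ) (hn : 0 < n) (f : MvPolynomial (Fin n ⊕ Fin n) ℂ)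
    (hf : f ∈ diagIdeal n) : lam n f = 0 := by
  classical
  refine vanish n (lam n) ?_ f hf
  intro p hp hp0 t
  have e1 : lam n (monomial t 1 * p) = ∑ q ∈ p.support, coeff q p * om n (t + q) := by
    conv_lhs => rw [p.as_sum]
    rw [mul_sum, map_sum]
    refine sum_congr rfl fun q _ => ?_
    rw [monomial_mul, one_mul, lam_monomial]
  rw [e1]
  -- nonzero terms
  have hnz : ∀ q, coeff q p ≠ 0 → om n (t + q) ≠ 0 →
      (∀ i, t (Sum.inl i) + t (Sum.inr i) = 1) ∧ ∃ x, qq n x = q := by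
    intro q hq ho
    obtain ⟨i, hi⟩ := om_ne n _ ho
    simp only [Finsupp.add_apply] at hi
    have hev := inv_even n p hp q hq
    have hj : ∀ j, j ≠ i → q (Sum.inl j) = 0 ∧ q (Sum.inr j) = 0 ∧
        t (Sum.inl j) + t (Sum.inr j) = 1 := by
      intro j hji
      have h1 := hi j
      obtain ⟨k, hk⟩ := hev j
      rw [if_neg hji] at h1
      omega
    have hqi : ¬ (q (Sum.inl i) = 0 ∧ q (Sum.inr i) = 0) := by
      rintro ⟨ha, hb⟩
      have : q = 0 := by
        ext v
        rcases v with j | j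
        · by_cases h : j = i
          · rw [h]; exact ha
          · exact (hj j h).1
        · by_cases h : j = i
          · rw [h]; exact hb
          · exact (hj j h).2.1
      rw [this, ← constantCoeff_eq, hp0] at hq
      exact hq rfl
    have h2 := hi i
    obtain ⟨k, hk⟩ := hev i
    rw [if_pos rfl] at h2
    refine ⟨?_, ⟨i, ⟨q (Sum.inr i), by omega⟩⟩, ?_⟩
    · intro j
      by_cases h : j = i
      · rw [h]; omega
      · exact (hj j h).2.2
    · ext v
      rcases v with j | j
      · rw [qq_l]
        by_cases h : j = i
        · subst h; simp; omega
        · simp [h, (hj j h).1]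
      · rw [qq_r]
        by_cases h : j = i
        · subst h; simp
        · simp [h, (hj j h).2.1]
  by_cases ht : ∀ i, t (Sum.inl i) + t (Sum.inr i) = 1
  · have e2 : ∑ q ∈ p.support, coeff q p * om n (t + q) =
        ∑ q ∈ univ.image (qq n), coeff q p * om n (t + q) := by
      apply sum_congr_of_eq_on_inter
      · intro q _ hq
        by_contra hne
        rw [mul_eq_zero, not_or] at hne
        obtain ⟨-, x, hx⟩ := hnz q hne.1 hne.2
        exact hq (mem_image.mpr ⟨x, mem_univ _, hx⟩)
      · intro q _ hq
        rw [notMem_support_iff.mp hq, zero_mul]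
      · intros; rfl
    rw [e2, sum_image fun a _ b _ h => qq_inj n h, Fintype.sum_prod_type_right]
    apply sum_eq_zero
    intro c _
    have e3 : ∀ i, coeff (qq n (i, c)) p = coeff (qq n (⟨0, hn⟩, c)) p := fun i =>
      coeff_qq n p hp i _ c
    simp only [e3]
    rw [← mul_sum, om_sum n t ht c, mul_zero]
  · apply sum_eq_zero
    intro q hq
    by_contra hne
    rw [mul_eq_zero, not_or] at hne
    exact ht (hnz q hne.1 hne.2).1


lemma type_zero (n : ℕ) (f : MvPolynomial (Fin n ⊕ Fin n) ℂ)
    (hf : ∀ σ : Equiv.Perm (Fin n), rename (Sum.map σ σ) f = f)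
    (ho : ∀ s ∈ f.support, ∀ i, Odd (s (Sum.inl i) + s (Sum.inr i)))
    (h0 : ∀ j, Phi n f (ee n j) = 0) : Phi n f = 0 := by
  refine alt_even n _ (Phi_alt n f hf) ?_ h0
  intro m hm i
  obtain ⟨s, hs, hu⟩ := Phi_ne n f m hm
  obtain ⟨h1, h2, k, hk⟩ := uu_ne n s m hu i
  obtain ⟨l, hl⟩ := ho s hs i
  refine ⟨⟨(m i / 2).toNat, by omega⟩, ?_⟩
  simp only
  omega

/-- the squarefree exponent attached to a subset -/
noncomputable def sA (n : ℕ) (A : Finset (Fin n)) : Fin n ⊕ Fin n →₀ ℕ :=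
  Finsupp.equivFunOnFinite.symm
    (Sum.elim (fun i => if i ∈ A then 0 else 1) (fun i => if i ∈ A then 1 else 0))

lemma sA_l (n : ℕ) (A : Finset (Fin n)) (i : Fin n) :
    sA n A (Sum.inl i) = if i ∈ A then 0 else 1 := rfl

lemma sA_r (n : ℕ) (A : Finset (Fin n)) (i : Fin n) :
    sA n A (Sum.inr i) = if i ∈ A then 1 else 0 := rfl

lemma sA_add (n : ℕ) (A : Finset (Fin n)) (i : Fin n) :
    sA n A (Sum.inl i) + sA n A (Sum.inr i) = 1 := by
  rw [sA_l, sA_r]; split_ifs <;> rfl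

lemma sA_inj (n : ℕ) : Function.Injective (sA n) := by
  intro A B h
  ext i
  have := DFunLike.congr_fun h (Sum.inr i)
  rw [sA_r, sA_r] at this
  split_ifs at this <;> simp_all

lemma degree_eq (n : ℕ) (s : Fin n ⊕ Fin n →₀ ℕ) :
    s.degree = ∑ i, (s (Sum.inl i) + s (Sum.inr i)) := by
  rw [Finsupp.degree_eq_sum, Fintype.sum_sum_type, sum_add_distrib]

lemma mapDomain_eq (n : ℕ) (σ : Equiv.Perm (Fin n)) (s t : Fin n ⊕ Fin n →₀ ℕ)
    (hl : ∀ i, t (Sum.inl (σ i)) = s (Sum.inl i)) (hr : ∀ i, t (Sum.inr (σ i)) = s (Sum.inr i)) :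
    s.mapDomain (Sum.map σ σ) = t := by
  have hi : Function.Injective (Sum.map σ σ) := σ.injective.sumMap σ.injective
  ext v
  rcases v with j | j
  · obtain ⟨i, rfl⟩ := σ.surjective j
    rw [hl]
    exact Finsupp.mapDomain_apply hi s (Sum.inl i)
  · obtain ⟨i, rfl⟩ := σ.surjective j
    rw [hr]
    exact Finsupp.mapDomain_apply hi s (Sum.inr i)

noncomputable def hh (n : ℕ) : (Fin (n + 1) → ℂ) →ₗ[ℂ] MvPolynomial (Fin n ⊕ Fin n) ℂ :=
  ∑ A : Finset (Fin n), monomial (sA n A) ∘ₗ LinearMap.proj (Fin.ofNat (n + 1) #A)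

lemma hh_apply (n : ℕ) (c : Fin (n + 1) → ℂ) :
    hh n c = ∑ A : Finset (Fin n), monomial (sA n A) (c (Fin.ofNat (n + 1) #A)) := by
  simp [hh, LinearMap.sum_apply]

lemma hh_perm (n : ℕ) (c : Fin (n + 1) → ℂ) (σ : Equiv.Perm (Fin n)) :
    rename (Sum.map σ σ) (hh n c) = hh n c := by
  rw [hh_apply, map_sum]
  conv_rhs => rw [← Equiv.sum_comp (Equiv.finsetCongr σ)]
  refine sum_congr rfl fun A _ => ?_
  rw [rename_monomial, Equiv.finsetCongr_apply, card_map]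
  congr 1
  apply congrArg
  apply mapDomain_eq
  · intro i; rw [sA_l, sA_l]; simp
  · intro i; rw [sA_r, sA_r]; simp

lemma hh_supp (n : ℕ) (c : Fin (n + 1) → ℂ) (s : Fin n ⊕ Fin n →₀ ℕ) (hs : s ∈ (hh n c).support) :
    ∃ A, s = sA n A := by
  classical
  rw [mem_support_iff, hh_apply, coeff_sum] at hs
  obtain ⟨A, -, hA⟩ := exists_ne_zero_of_sum_ne_zero hs
  rw [coeff_monomial] at hA
  by_contra hc
  push Not at hc
  exact hA (if_neg fun h => hc A h.symm)

lemma hh_coeff (n : ℕ) (c : Fin (n + 1) → ℂ) (A : Finset (Fin n)) :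
    coeff (sA n A) (hh n c) = c (Fin.ofNat (n + 1) #A) := by
  classical
  rw [hh_apply, coeff_sum, Fintype.sum_eq_single A]
  · simp
  · intro B hB
    rw [coeff_monomial, if_neg fun h => hB (sA_inj n h)]

lemma hh_hom (n : ℕ) (c : Fin (n + 1) → ℂ) : (hh n c).IsHomogeneous n := by
  rw [hh_apply]
  refine IsHomogeneous.sum _ _ _ fun A _ => isHomogeneous_monomial _ ?_
  rw [degree_eq]
  simp [sA_add]

lemma mem_JJ_of_hom (n d : ℕ) (f : MvPolynomial (Fin n ⊕ Fin n) ℂ) (hf : f.IsHomogeneous d)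
    (h : Phi n f ∈ GG n d) : f ∈ JJ n := by
  rw [mem_JJ]
  intro e
  rw [homogeneousComponent_of_mem ((mem_homogeneousSubmodule _ _).mpr hf)]
  split_ifs with he
  · rw [he]; exact h
  · rw [map_zero]; exact zero_mem _

noncomputable def sB (n : ℕ) (i : Fin n) : Fin n ⊕ Fin n →₀ ℕ :=
  Finsupp.equivFunOnFinite.symm
    (Sum.elim (fun j => if j = i then 0 else 1) (fun j => if j = i then 3 else 0))

lemma sB_l (n : ℕ) (i j : Fin n) : sB n i (Sum.inl j) = if j = i then 0 else 1 := rfl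

lemma sB_r (n : ℕ) (i j : Fin n) : sB n i (Sum.inr j) = if j = i then 3 else 0 := rfl

lemma sB_add (n : ℕ) (i j : Fin n) :
    sB n i (Sum.inl j) + sB n i (Sum.inr j) = 1 + if j = i then 2 else 0 := by
  rw [sB_l, sB_r]; split_ifs <;> rfl

noncomputable def ff (n : ℕ) : MvPolynomial (Fin n ⊕ Fin n) ℂ := ∑ i, monomial (sB n i) 1

lemma ff_perm (n : ℕ) (σ : Equiv.Perm (Fin n)) : rename (Sum.map σ σ) (ff n) = ff n := by
  unfold ff
  rw [map_sum]
  conv_rhs => rw [← Equiv.sum_comp σ]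
  refine sum_congr rfl fun i _ => ?_
  rw [rename_monomial]
  congr 1
  apply congrArg
  apply mapDomain_eq
  · intro j; rw [sB_l, sB_l]; simp
  · intro j; rw [sB_r, sB_r]; simp

lemma ff_supp (n : ℕ) (s : Fin n ⊕ Fin n →₀ ℕ) (hs : s ∈ (ff n).support) : ∃ i, s = sB n i := by
  classical
  rw [mem_support_iff, ff, coeff_sum] at hs
  obtain ⟨A, -, hA⟩ := exists_ne_zero_of_sum_ne_zero hs
  rw [coeff_monomial] at hA
  by_contra hc
  push Not at hc
  exact hA (if_neg fun h => hc A h.symm)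

lemma ff_hom (n : ℕ) : (ff n).IsHomogeneous (n + 2) := by
  refine IsHomogeneous.sum _ _ _ fun i _ => isHomogeneous_monomial _ ?_
  rw [degree_eq]
  simp [sB_add, sum_add_distrib]

lemma ff_not (n : ℕ) (hn : 4 ≤ n) : ff n ∉ diagIdeal n := by
  intro h
  have h1 := lam_diag n (by omega) _ h
  rw [ff, map_sum] at h1
  have h2 : ∀ i, lam n (monomial (sB n i) 1) = tau n 3 := by
    intro i
    rw [lam_monomial, one_mul, om_eval n _ i (sB_add n i), if_pos, sB_r, if_pos rfl]
    simp [sB_r]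
  simp only [h2, sum_const, card_univ, Fintype.card_fin, nsmul_eq_mul] at h1
  obtain ⟨k, rfl⟩ := Nat.exists_eq_add_of_le hn
  have h3 : ((4 + k : ℕ) : ℂ) * tau (4 + k) 3 = -(((4 + k) * (3 + k) * (2 + k) * (1 + k) : ℕ) : ℂ) := by
    simp [tau]
    ring
  rw [h3, neg_eq_zero, Nat.cast_eq_zero] at h1
  have : 0 < (4 + k) * (3 + k) * (2 + k) * (1 + k) := by positivity
  omega

noncomputable def TT (n : ℕ) : (Fin (n + 1) → ℂ) →ₗ[ℂ] (Fin (n + 1) → ℂ) :=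
  LinearMap.pi fun j => LinearMap.proj (ee n j) ∘ₗ Phi n ∘ₗ hh n

lemma TT_apply (n : ℕ) (c : Fin (n + 1) → ℂ) (j : Fin (n + 1)) :
    TT n c j = Phi n (hh n c) (ee n j) := rfl

lemma exists_extra (n : ℕ) (hn : 4 ≤ n) : ∃ f ∈ JJ n, f ∉ diagIdeal n := by
  classical
  by_cases hT : Function.Injective (TT n)
  · obtain ⟨c, hc⟩ := LinearMap.injective_iff_surjective.mp hT fun j => Phi n (ff n) (ee n j)
    refine ⟨ff n, ?_, ff_not n hn⟩
    have hz : Phi n (ff n - hh n c) = 0 := by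
      apply type_zero
      · intro σ; rw [map_sub, ff_perm, hh_perm]
      · intro s hs i
        rcases mem_union.mp (support_sub _ _ _ hs) with h | h
        · obtain ⟨k, rfl⟩ := ff_supp n s h
          rw [sB_add]
          split_ifs
          · exact ⟨1, rfl⟩
          · exact ⟨0, rfl⟩
        · obtain ⟨A, rfl⟩ := hh_supp n c s h
          rw [sA_add]
          exact odd_one
      · intro j
        have := congrFun hc j
        rw [TT_apply] at this
        rw [map_sub, Pi.sub_apply, this, sub_self]
    rw [map_sub, sub_eq_zero] at hz
    apply mem_JJ_of_hom n _ _ (ff_hom n)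
    rw [hz, hh_apply, map_sum]
    refine sum_mem fun A _ => ?_
    rw [Phi_monomial]
    refine Submodule.smul_mem _ _ (uu_mem _ _ _ ?_)
    rw [degree_eq]
    simp [sA_add]
  · rw [injective_iff_map_eq_zero] at hT
    push Not at hT
    obtain ⟨c, hc, hc0⟩ := hT
    refine ⟨hh n c, mem_JJ_of_hom n _ _ (hh_hom n c) ?_, ?_⟩
    · rw [type_zero n (hh n c) (hh_perm n c)]
      · exact zero_mem _
      · intro s hs i
        obtain ⟨A, rfl⟩ := hh_supp n c s hs
        rw [sA_add]
        exact odd_one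
      · intro j
        rw [← TT_apply, hc]; rfl
    · intro h
      apply hc0
      ext a
      obtain ⟨A, -, hA⟩ := exists_subset_card_eq (s := (univ : Finset (Fin n))) (n := (a : ℕ))
        (by have := a.2; simp; omega)
      have := coeff_diag n (sA n A) (sA_add n A) _ h
      rw [hh_coeff, hA] at this
      simpa using this

lemma main_bound (n : ℕ) (hn : 4 ≤ n) : (2 * n + 1) ^ n + 1 ≤
    Module.finrank ℂ (MvPolynomial (Fin n ⊕ Fin n) ℂ ⧸ diagIdeal n) := by
  have hle : diagIdeal n ≤ JJ n := by
    apply Ideal.span_le.mpr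
    rintro p ⟨hp, h0⟩
    exact inv_mem_JJ n p hp h0
  haveI := finite_diag n (by omega)
  obtain ⟨f, hf, hfn⟩ := exists_extra n hn
  let F := (Ideal.Quotient.factorₐ ℂ hle).toLinearMap
  have hF : Function.Surjective F := Ideal.Quotient.factor_surjective hle
  haveI : Module.Finite ℂ (MvPolynomial (Fin n ⊕ Fin n) ℂ ⧸ JJ n) := Module.Finite.of_surjective F hF
  have h1 := card_le n
  have h2 := LinearMap.finrank_range_add_finrank_ker F
  rw [LinearMap.range_eq_top.mpr hF, finrank_top] at h2
  have h3 : LinearMap.ker F ≠ ⊥ := by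
    intro hb
    have hm : Ideal.Quotient.mk (diagIdeal n) f ∈ LinearMap.ker F := by
      rw [LinearMap.mem_ker]
      exact Ideal.Quotient.eq_zero_iff_mem.mpr hf
    rw [hb, Submodule.mem_bot] at hm
    exact hfn (Ideal.Quotient.eq_zero_iff_mem.mp hm)
  have h4 := Submodule.one_le_finrank_iff.mpr h3
  omega

end DiagB

/-- For every `n ≥ 4`, `dim_ℂ R_W ≥ (2n+1)ⁿ + 1` for the diagonal coinvariant ring
of `W(Bₙ)`. -/
theorem dim_diag_coinv_gt (n : ℕ) (hn : 4 ≤ n) :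
    (2 * n + 1) ^ n + 1 ≤
      Module.finrank ℂ (MvPolynomial (Fin n ⊕ Fin n) ℂ ⧸ diagIdeal n) := by
  exact DiagB.main_bound n hn
end
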